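/- Fix an integer $d \ge 5$ and set $b := 2g + 2d - 2$. Define $T_1(g) := \frac{2}{(d!)^2}\left(\frac{d(d-1)}{2}\right)^{b}$, $T_2(g) := \frac{2}{((d-1)!)^2}\left(\frac{(d-1)(d-2)}{2}\right)^{b}$, $T_3(g) := \frac{2}{d^2 ((d-2)!)^2}\left(\frac{d(d-3)}{2}\right)^{b}$, and $T_4(g) := \frac{1}{2((d-2)!)^2}\left(\frac{d^2 - 5d + 8}{2}\right)^{b}$. Then the connected simple Hurwitz numbers satisfy $\lim_{g \to \infty} \dfrac{H_{g,d} - T_1(g) + T_2(g) - T_3(g)}{T_4(g)} \;=\; -1$; that is, $H_{g,d} = T_1(g) - T_2(g) + T_3(g) - T_4(g) + o(T_4(g))$ as $g \to \infty$. -/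

import Mathlib

open Real Filter Topology Equiv

/-- Connected simple Hurwitz numbers: `H_{g,d}` is `1/d!` times the number of tuples
`(τ₁, …, τ_b)` (with `b = 2g + 2d - 2`) of transpositions in `S_d` whose ordered product is
the identity and which generate a subgroup acting transitively on `{1, …, d}`. -/
noncomputable def hurwitz (g d : ℕ) : ℝ :=
  (Nat.card {τ : Fin (2 * g + 2 * d - 2) → Equiv.Perm (Fin d) //
      (∀ i, (τ i).IsSwap) ∧ (List.ofFn τ).prod = 1 ∧
      ∀ x y : Fin d, ∃ σ ∈ Subgroup.closure (Set.range τ), σ x = y} : ℝ) /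
    Nat.factorial d


lemma spec_basis {X : Type*} [Fintype X] (L : (X → ℝ) →ₗ[ℝ] (X → ℝ))
    (hs : ∀ f g : X → ℝ, ∑ x, L f x * g x = ∑ x, f x * L g x)
    (V : Submodule ℝ (X → ℝ)) (hV : ∀ f ∈ V, L f ∈ V) :
    ∃ (m : ℕ) (μ : Fin m → ℝ) (e : Fin m → X → ℝ), (∀ i, e i ∈ V) ∧
      (∀ i, L (e i) = μ i • e i) ∧ (∀ i j, ∑ x, e i x * e j x = if i = j then 1 else 0) ∧
      ∀ f ∈ V, ∃ c : Fin m → ℝ, f = ∑ i, c i • e i := by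
  classical
  let φ := WithLp.linearEquiv 2 ℝ (X → ℝ)
  let V' : Submodule ℝ (EuclideanSpace ℝ X) := V.comap φ.toLinearMap
  let L' : EuclideanSpace ℝ X →ₗ[ℝ] EuclideanSpace ℝ X := φ.symm.toLinearMap ∘ₗ L ∘ₗ φ.toLinearMap
  have hinv : ∀ v ∈ V', L' v ∈ V' := by
    intro v hv
    simp only [V', L', Submodule.mem_comap] at hv ⊢
    simpa using hV _ hv
  have hin : ∀ u v : EuclideanSpace ℝ X, inner ℝ u v = ∑ x, φ u x * φ v x := by
    intro u v
    simp [PiLp.inner_apply, φ, mul_comm]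
  have hsym : L'.IsSymmetric := by
    intro u v
    rw [hin, hin]
    simpa [L'] using hs (φ u) (φ v)
  have hr := hsym.restrict_invariant hinv
  let bs := hr.eigenvectorBasis rfl
  refine ⟨_, hr.eigenvalues rfl, fun i => φ (bs i : EuclideanSpace ℝ X), fun i => (bs i).2, ?_, ?_, ?_⟩
  · intro i
    have h := hr.apply_eigenvectorBasis rfl i
    have h2 := congrArg (fun v : V' => φ (v : EuclideanSpace ℝ X)) h
    exact h2
  · intro i j
    rw [← hin]
    have := (orthonormal_iff_ite.mp bs.orthonormal) i j
    simpa using this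
  · intro f hf
    let v : V' := ⟨φ.symm f, by simpa [V'] using hf⟩
    refine ⟨fun i => bs.repr v i, ?_⟩
    have h := bs.sum_repr v
    have h2 := congrArg (fun v : V' => φ (v : EuclideanSpace ℝ X)) h
    simp only [AddSubmonoidClass.coe_finsetSum, map_sum, Submodule.coe_smul, map_smul] at h2
    rw [h2]; simp [v]

lemma spec_rayleigh {X : Type*} [Fintype X] (L : (X → ℝ) →ₗ[ℝ] (X → ℝ))
    (hs : ∀ f g : X → ℝ, ∑ x, L f x * g x = ∑ x, f x * L g x)
    (V : Submodule ℝ (X → ℝ)) (hV : ∀ f ∈ V, L f ∈ V) (θ : ℝ)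
    (hθ : ∀ (μ : ℝ) (e : X → ℝ), e ∈ V → e ≠ 0 → L e = μ • e → μ ≤ θ)
    (f : X → ℝ) (hf : f ∈ V) : ∑ x, f x * L f x ≤ θ * ∑ x, f x ^ 2 := by
  classical
  obtain ⟨m, μ, e, he, hL, ho, hc⟩ := spec_basis L hs V hV
  obtain ⟨c, rfl⟩ := hc f hf
  have hne : ∀ i, e i ≠ 0 := by
    intro i h
    have := ho i i
    simp [h] at this
  have key : ∀ a : Fin m → ℝ, ∑ x, (∑ i, c i • e i) x * (∑ i, a i • e i) x = ∑ i, c i * a i := by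
    intro a
    simp only [Finset.sum_apply, Pi.smul_apply, smul_eq_mul, Finset.sum_mul_sum]
    rw [Finset.sum_comm]
    refine Finset.sum_congr rfl fun i _ => ?_
    rw [Finset.sum_comm]
    have : ∀ j, ∑ x, c i * e i x * (a j * e j x) = c i * a j * if i = j then 1 else 0 := by
      intro j
      rw [← ho, Finset.mul_sum]
      exact Finset.sum_congr rfl fun x _ => by ring
    simp [this]
  have h1 : L (∑ i, c i • e i) = ∑ i, (c i * μ i) • e i := by
    simp [map_sum, hL, smul_smul]
  rw [h1, key]
  simp only [sq]
  rw [key, Finset.mul_sum]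
  refine Finset.sum_le_sum fun i _ => ?_
  have := hθ _ _ (he i) (hne i) (hL i)
  nlinarith [mul_self_nonneg (c i)]

lemma spec_pow {X : Type*} [Fintype X] (L : (X → ℝ) →ₗ[ℝ] (X → ℝ))
    (hs : ∀ f g : X → ℝ, ∑ x, L f x * g x = ∑ x, f x * L g x)
    (V : Submodule ℝ (X → ℝ)) (hV : ∀ f ∈ V, L f ∈ V) (M : ℝ) (hM : 0 < M)
    (hθ : ∀ (μ : ℝ) (e : X → ℝ), e ∈ V → e ≠ 0 → L e = μ • e → |μ| < M)
    (f : X → ℝ) (hf : f ∈ V) (x : X) :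
    Tendsto (fun b : ℕ => (L ^ b) f x / M ^ b) atTop (𝓝 0) := by
  classical
  obtain ⟨m, μ, e, he, hL, ho, hc⟩ := spec_basis L hs V hV
  obtain ⟨c, rfl⟩ := hc f hf
  have hne : ∀ i, e i ≠ 0 := by
    intro i h
    have := ho i i
    simp [h] at this
  have hp : ∀ b i, (L ^ b) (e i) = (μ i) ^ b • e i := by
    intro b i
    induction b with
    | zero => simp
    | succ b ih => rw [pow_succ', Module.End.mul_apply, ih, map_smul, hL, smul_smul, pow_succ]
  have : ∀ b : ℕ, (L ^ b) (∑ i, c i • e i) x / M ^ b = ∑ i, c i * e i x * (μ i / M) ^ b := by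
    intro b
    simp only [map_sum, map_smul, hp, Finset.sum_apply, Pi.smul_apply, smul_eq_mul, Finset.sum_div, div_pow]
    exact Finset.sum_congr rfl fun i _ => by ring
  simp only [this]
  have : (0:ℝ) = ∑ i, c i * e i x * 0 := by simp
  rw [this]
  refine tendsto_finsetSum _ fun i _ => ?_
  refine Tendsto.const_mul _ (tendsto_pow_atTop_nhds_zero_of_abs_lt_one ?_)
  rw [abs_div, abs_of_pos hM, div_lt_one hM]
  exact hθ _ _ (he i) (hne i) (hL i)

def walkOp {G : Type*} [Group G] (T : Finset G) : (G → ℝ) →ₗ[ℝ] (G → ℝ) where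
  toFun f := fun x => ∑ t ∈ T, f (t * x)
  map_add' f g := by ext x; simp [Finset.sum_add_distrib]
  map_smul' c f := by ext x; simp [Finset.mul_sum]

lemma walkOp_apply {G : Type*} [Group G] (T : Finset G) (f : G → ℝ) (x : G) :
    walkOp T f x = ∑ t ∈ T, f (t * x) := rfl

def cnt {G : Type*} [Group G] [Fintype G] [DecidableEq G] (T : Finset G) (b : ℕ) : ℕ :=
  (Finset.univ.filter fun τ : Fin b → G => (∀ i, τ i ∈ T) ∧ (List.ofFn τ).prod = 1).card

lemma walkOp_pow {G : Type*} [Group G] [Fintype G] [DecidableEq G] (T : Finset G) (b : ℕ) :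
    ∀ (f : G → ℝ) (x : G), (walkOp T ^ b) f x =
      ∑ τ : Fin b → G, if ∀ i, τ i ∈ T then f ((List.ofFn τ).prod * x) else 0 := by
  induction b with
  | zero => intro f x; simp
  | succ b ih =>
    intro f x
    rw [pow_succ, Module.End.mul_apply, ih, ← (Fin.consEquiv (fun _ : Fin (b+1) => G)).sum_comp,
      Fintype.sum_prod_type_right]
    refine Finset.sum_congr rfl fun τ _ => ?_
    simp only [Fin.consEquiv, Equiv.coe_fn_mk, Fin.forall_fin_succ, Fin.cons_zero, Fin.cons_succ,
      List.ofFn_succ, List.prod_cons, walkOp_apply]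
    by_cases h : ∀ i, τ i ∈ T
    · simp [h, mul_assoc, Finset.sum_ite_mem]
    · simp [h]

lemma cnt_eq {G : Type*} [Group G] [Fintype G] [DecidableEq G] (T : Finset G) (b : ℕ) :
    (cnt T b : ℝ) = (walkOp T ^ b) (Pi.single 1 1) 1 := by
  rw [walkOp_pow, cnt, Finset.card_filter]
  push_cast
  refine Finset.sum_congr rfl fun τ _ => ?_
  simp only [mul_one, Pi.single_apply]
  split_ifs <;> simp_all

lemma walkOp_symm {G : Type*} [Group G] [Fintype G] (T : Finset G)
    (hT : ∀ t ∈ T, t * t = 1) (f g : G → ℝ) :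
    ∑ x, walkOp T f x * g x = ∑ x, f x * walkOp T g x := by
  simp only [walkOp_apply, Finset.sum_mul, Finset.mul_sum]
  rw [Finset.sum_comm, Finset.sum_comm (s := Finset.univ)]
  refine Finset.sum_congr rfl fun t ht => ?_
  rw [← Equiv.sum_comp (Equiv.mulLeft t)]
  refine Finset.sum_congr rfl fun x _ => ?_
  simp [← mul_assoc, hT t ht]

lemma pow_eigen {X : Type*} (L : (X → ℝ) →ₗ[ℝ] (X → ℝ)) (f : X → ℝ) (c : ℝ) (h : L f = c • f)
    (b : ℕ) : (L ^ b) f = c ^ b • f := by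
  induction b with
  | zero => simp
  | succ b ih => rw [pow_succ', Module.End.mul_apply, ih, map_smul, h, smul_smul, pow_succ]

lemma walkOp_dirichlet {G : Type*} [Group G] [Fintype G] (T : Finset G)
    (f : G → ℝ) (μ s : ℝ) (hs : s ^ 2 = 1) (h : walkOp T f = μ • f) :
    ∑ x, ∑ t ∈ T, (f (t * x) - s * f x) ^ 2 = 2 * (T.card - s * μ) * ∑ x, f x ^ 2 := by
  have h1 : ∑ x, ∑ t ∈ T, (f (t * x) - s * f x) ^ 2 =
      ∑ x, ∑ t ∈ T, f (t * x) ^ 2 - 2 * s * ∑ x, f x * walkOp T f x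
        + T.card * ∑ x, f x ^ 2 := by
    simp only [walkOp_apply, Finset.mul_sum, ← Finset.sum_sub_distrib, ← Finset.sum_add_distrib]
    refine Finset.sum_congr rfl fun x _ => ?_
    have : (T.card : ℝ) * f x ^ 2 = ∑ t ∈ T, f x ^ 2 := by simp
    rw [this, ← Finset.sum_add_distrib]
    refine Finset.sum_congr rfl fun t _ => ?_
    linear_combination f x ^ 2 * hs
  have h2 : ∑ x, ∑ t ∈ T, f (t * x) ^ 2 = T.card * ∑ x, f x ^ 2 := by
    rw [Finset.sum_comm]
    have : ∀ t ∈ T, ∑ x, f (t * x) ^ 2 = ∑ x, f x ^ 2 := fun t _ =>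
      Equiv.sum_comp (Equiv.mulLeft t) (fun x => f x ^ 2)
    rw [Finset.sum_congr rfl this]; simp
  rw [h1, h2, h]
  have : ∑ x, f x * (μ • f) x = μ * ∑ x, f x ^ 2 := by
    rw [Finset.mul_sum]; exact Finset.sum_congr rfl fun x _ => by simp; ring
  rw [this]; ring

lemma eq_of_dirichlet {G : Type*} [Group G] [Fintype G] (T : Finset G)
    (f : G → ℝ) (μ s : ℝ) (hs : s ^ 2 = 1) (h : walkOp T f = μ • f) (hμ : T.card ≤ s * μ) :
    ∀ x, ∀ t ∈ T, f (t * x) = s * f x := by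
  have h1 := walkOp_dirichlet T f μ s hs h
  have h2 : ∑ x, ∑ t ∈ T, (f (t * x) - s * f x) ^ 2 = 0 := by
    apply le_antisymm
    · rw [h1]
      have : 0 ≤ ∑ x, f x ^ 2 := Finset.sum_nonneg fun _ _ => sq_nonneg _
      nlinarith
    · exact Finset.sum_nonneg fun _ _ => Finset.sum_nonneg fun _ _ => sq_nonneg _
  intro x t ht
  rw [Finset.sum_eq_zero_iff_of_nonneg (fun _ _ => Finset.sum_nonneg fun _ _ => sq_nonneg _)] at h2
  have h3 := h2 x (Finset.mem_univ _)
  rw [Finset.sum_eq_zero_iff_of_nonneg (fun _ _ => sq_nonneg _)] at h3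
  have h4 := h3 t ht
  have := pow_eq_zero_iff (two_ne_zero) |>.mp h4
  linarith

lemma const_of_gen {G : Type*} [Group G] (T : Finset G) (hgen : Subgroup.closure (T : Set G) = ⊤)
    (f : G → ℝ) (h : ∀ x, ∀ t ∈ T, f (t * x) = f x) (x : G) : f x = f 1 := by
  have : ∀ g ∈ Subgroup.closure (T : Set G), ∀ x, f (g * x) = f x := by
    intro g hg
    induction hg using Subgroup.closure_induction with
    | mem t ht => exact fun x => h x t ht
    | one => simp
    | mul a b _ _ ha hb => intro x; rw [mul_assoc, ha, hb]
    | inv a _ ha => intro x; rw [← ha]; simp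
  simpa using this x (by rw [hgen]; trivial) 1

noncomputable def sg {G : Type*} [Group G] (ε : G →* ℤˣ) (x : G) : ℝ := ((ε x : ℤ) : ℝ)

lemma sg_mul {G : Type*} [Group G] (ε : G →* ℤˣ) (x y : G) : sg ε (x * y) = sg ε x * sg ε y := by
  simp [sg]
lemma sg_one {G : Type*} [Group G] (ε : G →* ℤˣ) : sg ε 1 = 1 := by
  simp [sg]
lemma sg_sq {G : Type*} [Group G] (ε : G →* ℤˣ) (x : G) : sg ε x * sg ε x = 1 := by
  simp only [sg]
  rcases Int.units_eq_one_or (ε x) with h | h <;> simp [h]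
lemma sg_neg {G : Type*} [Group G] (ε : G →* ℤˣ) (x : G) (h : ε x = -1) : sg ε x = -1 := by
  simp [sg, h]

lemma walkOp_sg {G : Type*} [Group G] (T : Finset G) (ε : G →* ℤˣ)
    (hε : ∀ t ∈ T, ε t = -1) (f : G → ℝ) (x : G) :
    walkOp T (fun x => sg ε x * f x) x = - (sg ε x * walkOp T f x) := by
  simp only [walkOp_apply, Finset.mul_sum, ← Finset.sum_neg_distrib]
  refine Finset.sum_congr rfl fun t ht => ?_
  rw [sg_mul, sg_neg ε t (hε t ht)]; ring

lemma perron {G : Type*} [Group G] [Fintype G] [DecidableEq G] (T : Finset G)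
    (hT : ∀ t ∈ T, t * t = 1) (ε : G →* ℤˣ) (hε : ∀ t ∈ T, ε t = -1) (hne : T.Nonempty)
    (hgen : Subgroup.closure (T : Set G) = ⊤) :
    ∃ r : ℕ → ℝ, Tendsto (fun b : ℕ => r b / (T.card : ℝ) ^ b) atTop (𝓝 0) ∧
      ∀ b, Even b → (cnt T b : ℝ) = 2 / (Fintype.card G : ℝ) * (T.card : ℝ) ^ b + r b := by
  obtain ⟨t0, ht0⟩ := hne
  have hcard : (0:ℝ) < Fintype.card G := by exact_mod_cast Fintype.card_pos
  let V : Submodule ℝ (G → ℝ) :=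
    { carrier := {f | ∑ x, f x = 0 ∧ ∑ x, sg ε x * f x = 0}
      add_mem' := by
        rintro f g ⟨h1, h2⟩ ⟨h3, h4⟩
        simp only [Set.mem_ofPred_eq, Pi.add_apply, mul_add, Finset.sum_add_distrib, *, add_zero, and_self]
      zero_mem' := by simp
      smul_mem' := by
        rintro c f ⟨h1, h2⟩
        simp only [Set.mem_ofPred_eq, Pi.smul_apply, smul_eq_mul, ← Finset.mul_sum, h1, mul_zero, true_and]
        calc ∑ x, sg ε x * (c * f x) = c * ∑ x, sg ε x * f x := by
              rw [Finset.mul_sum]; exact Finset.sum_congr rfl fun _ _ => by ring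
          _ = 0 := by rw [h2, mul_zero] }
  have hsgsum : ∑ x, sg ε x = 0 := by
    have := Equiv.sum_comp (Equiv.mulLeft t0) (sg ε)
    simp only [Equiv.coe_mulLeft, sg_mul, sg_neg ε t0 (hε t0 ht0), ← Finset.mul_sum] at this
    linarith
  have hone : walkOp T (fun _ => (1:ℝ)) = (T.card : ℝ) • (fun _ => (1:ℝ)) := by
    ext x; simp [walkOp_apply]
  have hsg : walkOp T (sg ε) = (-(T.card : ℝ)) • sg ε := by
    ext x
    have := walkOp_sg T ε hε (fun _ => 1) x
    simp only [mul_one] at this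
    rw [show sg ε = fun x => sg ε x from rfl, this, hone]
    simp; ring
  have hV : ∀ f ∈ V, walkOp T f ∈ V := by
    rintro f ⟨h1, h2⟩
    constructor
    · have := walkOp_symm T hT f (fun _ => 1)
      rw [hone] at this
      simp only [mul_one, Pi.smul_apply, smul_eq_mul] at this
      rw [this, ← Finset.sum_mul, h1, zero_mul]
    · have := walkOp_symm T hT f (sg ε)
      rw [hsg] at this
      simp only [Pi.smul_apply, smul_eq_mul] at this
      calc ∑ x, sg ε x * walkOp T f x = ∑ x, walkOp T f x * sg ε x :=
            Finset.sum_congr rfl fun _ _ => by ring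
        _ = _ := this
        _ = -(T.card : ℝ) * ∑ x, sg ε x * f x := by
            rw [Finset.mul_sum]; exact Finset.sum_congr rfl fun _ _ => by ring
        _ = 0 := by rw [h2, mul_zero]
  have hTpos : (0:ℝ) < T.card := by exact_mod_cast Finset.card_pos.mpr ⟨t0, ht0⟩
  let w : G → ℝ := Pi.single 1 1 - (1 / (Fintype.card G : ℝ)) • (fun _ => (1:ℝ)) -
    (1 / (Fintype.card G : ℝ)) • sg ε
  have hw : w ∈ V := by
    constructor
    · simp only [w, Pi.sub_apply, Pi.smul_apply, smul_eq_mul, Finset.sum_sub_distrib, ← Finset.mul_sum, hsgsum]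
      simp [Pi.single_apply]
    · simp only [w, Pi.sub_apply, Pi.smul_apply, smul_eq_mul, mul_sub, Finset.sum_sub_distrib]
      have h1 : ∑ x, sg ε x * (Pi.single (1:G) (1:ℝ) : G → ℝ) x = 1 := by
        simp [Pi.single_apply, sg_one]
      have h2 : ∑ x, sg ε x * (1 / (Fintype.card G : ℝ) * 1) = 0 := by
        rw [← Finset.sum_mul, hsgsum, zero_mul]
      have h3 : ∑ x, sg ε x * (1 / (Fintype.card G : ℝ) * sg ε x) = 1 := by
        have : ∀ x, sg ε x * (1 / (Fintype.card G : ℝ) * sg ε x) = 1 / (Fintype.card G : ℝ) := by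
          intro x; linear_combination (1 / (Fintype.card G : ℝ)) * sg_sq ε x
        rw [Finset.sum_congr rfl (fun x _ => this x)]; simp
      rw [h1, h2, h3]; ring
  refine ⟨fun b => (walkOp T ^ b) w 1, ?_, ?_⟩
  · refine spec_pow (walkOp T) (walkOp_symm T hT) V hV _ hTpos ?_ w hw 1
    rintro μ e ⟨h1, h2⟩ hne he
    by_contra hcon
    push Not at hcon
    apply hne
    rcases le_abs.mp hcon with h | h
    · have := eq_of_dirichlet T e μ 1 (by norm_num) he (by linarith)
      have hc := const_of_gen T hgen e (by simpa using this)
      have h1' := h1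
      rw [Finset.sum_congr rfl (fun x _ => hc x)] at h1'
      simp at h1'
      ext x; rw [hc x, h1']; rfl
    · have := eq_of_dirichlet T e μ (-1) (by norm_num) he (by linarith)
      have hc := const_of_gen T hgen (fun x => sg ε x * e x) (by
        intro x t ht
        rw [sg_mul, sg_neg ε t (hε t ht), this x t ht]; ring)
      have h1' := h2
      rw [Finset.sum_congr rfl (fun x _ => hc x)] at h1'
      simp [sg_one] at h1'
      ext x
      have h3 := hc x
      simp only [sg_one, h1', mul_zero] at h3
      have h4 := sg_sq ε x
      simp only [Pi.zero_apply]
      linear_combination sg ε x * h3 - e x * h4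
  · intro b hb
    have : (Pi.single 1 1 : G → ℝ) = w + (1 / (Fintype.card G : ℝ)) • (fun _ => (1:ℝ)) +
        (1 / (Fintype.card G : ℝ)) • sg ε := by simp only [w]; abel
    rw [cnt_eq, this, map_add, map_add, map_smul, map_smul, pow_eigen _ _ _ hone, pow_eigen _ _ _ hsg,
      hb.neg_pow]
    simp [sg_one]; ring

def swaps (α : Type) [Fintype α] [DecidableEq α] : Finset (Perm α) :=
  (Finset.univ.filter fun p : α × α => p.1 ≠ p.2).image fun p => swap p.1 p.2

lemma mem_swaps {α : Type} [Fintype α] [DecidableEq α] (t : Perm α) :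
    t ∈ swaps α ↔ t.IsSwap := by
  simp only [swaps, Finset.mem_image, Finset.mem_filter, Finset.mem_univ, true_and, Prod.exists,
    Perm.IsSwap]
  constructor
  · rintro ⟨a, b, h, rfl⟩; exact ⟨a, b, h, rfl⟩
  · rintro ⟨a, b, h, rfl⟩; exact ⟨a, b, h, rfl⟩

lemma swaps_sq {α : Type} [Fintype α] [DecidableEq α] : ∀ t ∈ swaps α, t * t = 1 := by
  intro t ht
  rw [mem_swaps] at ht
  obtain ⟨a, b, _, rfl⟩ := ht
  simp

lemma swaps_sign {α : Type} [Fintype α] [DecidableEq α] : ∀ t ∈ swaps α, Perm.sign t = -1 := by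
  intro t ht
  rw [mem_swaps] at ht
  exact ht.sign_eq

lemma swap_fiber {α : Type} [Fintype α] [DecidableEq α] (x y a b : α) (h : x ≠ y)
    (hab : a ≠ b) : swap a b = swap x y ↔ (a = x ∧ b = y) ∨ (a = y ∧ b = x) := by
  constructor
  · intro he
    have h1 : swap x y a = b := by rw [← he]; simp
    have h2 : swap x y b = a := by rw [← he]; simp
    rw [swap_apply_def] at h1
    split_ifs at h1 <;> grind
  · rintro (⟨rfl, rfl⟩ | ⟨rfl, rfl⟩)
    · rfl
    · exact swap_comm _ _

lemma sum_swaps {α : Type} [Fintype α] [DecidableEq α] (f : Perm α → ℝ) :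
    ∑ a, ∑ b, f (swap a b) = 2 * ∑ t ∈ swaps α, f t + Fintype.card α * f 1 := by
  rw [← Fintype.sum_prod_type' (f := fun a b => f (swap a b)),
    ← Finset.sum_filter_add_sum_filter_not _ (fun p : α × α => p.1 ≠ p.2)]
  congr 1
  · rw [← Finset.sum_fiberwise_of_maps_to (s := Finset.univ.filter fun p : α × α => p.1 ≠ p.2)
      (t := swaps α) (g := fun p => swap p.1 p.2)
      (fun p hp => Finset.mem_image_of_mem _ hp), Finset.mul_sum]
    refine Finset.sum_congr rfl fun t ht => ?_
    rw [mem_swaps] at ht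
    obtain ⟨x, y, hxy, rfl⟩ := ht
    rw [Finset.sum_congr rfl (g := fun _ => f (swap x y))
      (fun p hp => by rw [(Finset.mem_filter.mp hp).2])]
    have : (Finset.univ.filter fun p : α × α => p.1 ≠ p.2).filter
        (fun p => swap p.1 p.2 = swap x y) = {(x, y), (y, x)} := by
      ext ⟨a, b⟩
      simp only [Finset.mem_filter, Finset.mem_univ, true_and, Finset.mem_insert,
        Finset.mem_singleton, Prod.mk.injEq]
      constructor
      · rintro ⟨h1, h2⟩; exact (swap_fiber x y a b hxy h1).mp h2
      · intro h
        have h1 : a ≠ b := by grind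
        exact ⟨h1, (swap_fiber x y a b hxy h1).mpr h⟩
    rw [this, Finset.sum_const, Finset.card_pair (by simp [hxy])]
    simp
  · have h1 : ∑ p : α × α with ¬ p.1 ≠ p.2, f (swap p.1 p.2) = ∑ a : α, f 1 := by
      symm
      refine Finset.sum_bij (fun a _ => (a, a)) (by simp) (by simp) ?_ (by simp [Perm.one_def])
      rintro ⟨a, b⟩ h
      simp at h
      exact ⟨a, by simp [h]⟩
    rw [h1]; simp

noncomputable def bOp (α : Type) [Fintype α] [DecidableEq α] :
    (Perm α → ℝ) →ₗ[ℝ] (Perm α → ℝ) :=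
  (2:ℝ) • walkOp (swaps α) + (Fintype.card α : ℝ) • LinearMap.id

lemma bOp_apply {α : Type} [Fintype α] [DecidableEq α] (f : Perm α → ℝ) (σ : Perm α) :
    bOp α f σ = ∑ a, ∑ b, f (swap a b * σ) := by
  rw [sum_swaps (fun t => f (t * σ))]
  simp [bOp, walkOp_apply]

lemma bOp_symm {α : Type} [Fintype α] [DecidableEq α] (f g : Perm α → ℝ) :
    ∑ x, bOp α f x * g x = ∑ x, f x * bOp α g x := by
  have := walkOp_symm (swaps α) swaps_sq f g
  simp only [bOp, LinearMap.add_apply, LinearMap.smul_apply, Pi.add_apply, Pi.smul_apply,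
    smul_eq_mul, LinearMap.id_apply, add_mul, mul_add, Finset.sum_add_distrib]
  congr 1
  · calc _ = 2 * ∑ x, walkOp (swaps α) f x * g x := by
          rw [Finset.mul_sum]; exact Finset.sum_congr rfl fun _ _ => by ring
      _ = _ := by
          rw [this, Finset.mul_sum]; exact Finset.sum_congr rfl fun _ _ => by ring
  · exact Finset.sum_congr rfl fun _ _ => by ring

lemma sum_swap1 {α : Type} [Fintype α] [DecidableEq α] (F : α → ℝ) (j : α) :
    ∑ a, ∑ b, F (swap a b j) =
      ((Fintype.card α : ℝ) ^ 2 - 2 * Fintype.card α) * F j + 2 * ∑ a, F a := by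
  have h : ∀ a b, F (swap a b j) = F j + (if a = j then F b - F j else 0)
      + (if b = j then F a - F j else 0) := by
    intro a b
    rw [swap_apply_def]
    split_ifs <;> grind
  simp only [h, Finset.sum_add_distrib]
  simp only [Finset.sum_ite_eq', Finset.mem_univ, if_true, Finset.sum_sub_distrib, Finset.sum_const,
    Finset.card_univ, nsmul_eq_mul]
  rw [Finset.sum_comm]
  simp only [Finset.sum_ite_eq', Finset.mem_univ, if_true, Finset.sum_sub_distrib, Finset.sum_const,
    Finset.card_univ, nsmul_eq_mul]
  ring

lemma sum_swap2 {α : Type} [Fintype α] [DecidableEq α] (F : α → α → ℝ) (j k : α) (hjk : j ≠ k)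
    (hd : ∀ p, F p p = 0) (hr : ∀ p, ∑ q, F p q = 0) (hc : ∀ q, ∑ p, F p q = 0) :
    ∑ a, ∑ b, F (swap a b j) (swap a b k) =
      ((Fintype.card α : ℝ) ^ 2 - 4 * Fintype.card α + 2) * F j k + 2 * F k j := by
  have h : ∀ a b, F (swap a b j) (swap a b k) = F j k + (if a = j then F b k - F j k else 0)
      + (if b = j then F a k - F j k else 0) + (if a = k then F j b - F j k else 0)
      + (if b = k then F j a - F j k else 0)
      + (if a = j then (if b = k then F k j + F j k else 0) else 0)
      + (if a = k then (if b = j then F k j + F j k else 0) else 0) := by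
    intro a b
    have := hd j
    have := hd k
    simp only [swap_apply_def]
    by_cases h1 : a = j <;> by_cases h2 : b = j <;> by_cases h3 : a = k <;> by_cases h4 : b = k <;>
      grind
  have e : ∀ (u : α) (g : α → ℝ), (∑ a, ∑ b, if a = u then g b else 0) = ∑ b, g b := by
    intro u g
    rw [Finset.sum_comm]; simp
  have e' : ∀ (u : α) (g : α → ℝ), (∑ a, ∑ b, if b = u then g a else 0) = ∑ b, g b := by
    intro u g; simp
  simp only [h, Finset.sum_add_distrib, e, e']
  simp only [Finset.sum_sub_distrib, hr, hc, Finset.sum_ite_eq', Finset.mem_univ, if_true, Finset.sum_const,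
    Finset.card_univ, nsmul_eq_mul]
  ring

lemma sum_coset {α : Type} [Fintype α] [DecidableEq α] (i : α) (g : Perm α → ℝ) :
    ∑ σ, g σ = ∑ k, ∑ ρ : Perm {a // a ≠ i}, g (Perm.ofSubtype ρ * swap k i) := by
  rw [← Fintype.sum_prod_type' (f := fun k (ρ : Perm {a // a ≠ i}) => g (Perm.ofSubtype ρ * swap k i))]
  symm
  have hinj : Function.Injective
      (fun p : α × Perm {a // a ≠ i} => Perm.ofSubtype p.2 * swap p.1 i) := by
    have hi : ∀ ρ : Perm {a // a ≠ i}, Perm.ofSubtype ρ i = i := fun ρ =>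
      Perm.ofSubtype_apply_of_not_mem ρ (by simp)
    rintro ⟨k, ρ⟩ ⟨k', ρ'⟩ h
    simp only at h
    have h1 : k = k' := by
      have h2 : (Perm.ofSubtype ρ * swap k i) k = i := by simp [hi]
      have h3 : (Perm.ofSubtype ρ * swap k i) k' = i := by rw [h]; simp [hi]
      exact (Perm.ofSubtype ρ * swap k i).injective (h2.trans h3.symm)
    subst h1
    have := mul_right_cancel h
    rw [Perm.ofSubtype_injective this]
  have hbij : Function.Bijective
      (fun p : α × Perm {a // a ≠ i} => Perm.ofSubtype p.2 * swap p.1 i) := by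
    rw [Fintype.bijective_iff_injective_and_card]
    refine ⟨hinj, ?_⟩
    rw [Fintype.card_prod, Fintype.card_perm, Fintype.card_perm]
    have : Fintype.card {a // a ≠ i} = Fintype.card α - 1 := by
      rw [Fintype.card_subtype_compl]; simp
    rw [this]
    exact Nat.mul_factorial_pred (Fintype.card_pos_iff.mpr ⟨i⟩).ne'
  exact hbij.sum_comp g

def U1 (α : Type) [Fintype α] [DecidableEq α] : Submodule ℝ (Perm α → ℝ) where
  carrier := {f | ∀ i j, ∑ σ : Perm α, (if σ i = j then f σ else 0) = 0}
  add_mem' := by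
    intro f g hf hg i j
    have : ∀ σ : Perm α, (if σ i = j then (f + g) σ else 0) =
      (if σ i = j then f σ else 0) + (if σ i = j then g σ else 0) := by
      intro σ; split_ifs <;> simp
    simp only [this, Finset.sum_add_distrib, hf i j, hg i j, add_zero]
  zero_mem' := by intro i j; simp
  smul_mem' := by
    intro c f hf i j
    have : ∀ σ : Perm α, (if σ i = j then (c • f) σ else 0) =
      c * (if σ i = j then f σ else 0) := by
      intro σ; split_ifs <;> simp
    simp only [this, ← Finset.mul_sum, hf i j, mul_zero]

lemma mem_U1 {α : Type} [Fintype α] [DecidableEq α] (f : Perm α → ℝ) :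
    f ∈ U1 α ↔ ∀ i j, ∑ σ : Perm α, (if σ i = j then f σ else 0) = 0 := Iff.rfl

lemma shift1 {α : Type} [Fintype α] [DecidableEq α] (f : Perm α → ℝ) (t : Perm α)
    (ht : t * t = 1) (i j : α) :
    ∑ σ : Perm α, (if σ i = j then f (t * σ) else 0) =
      ∑ σ : Perm α, (if σ i = t j then f σ else 0) := by
  rw [← Equiv.sum_comp (Equiv.mulLeft t)]
  refine Finset.sum_congr rfl fun σ _ => ?_
  have h : ∀ x, t (t x) = x := fun x => by rw [← Perm.mul_apply, ht]; rfl
  have : (t (σ i) = j) ↔ (σ i = t j) := by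
    constructor
    · intro h1; rw [← h1, h]
    · intro h1; rw [h1, h]
  simp only [coe_mulLeft, Perm.mul_apply, ← mul_assoc, ht, one_mul, this]

lemma shift2 {α : Type} [Fintype α] [DecidableEq α] (f : Perm α → ℝ) (t : Perm α)
    (ht : t * t = 1) (i j i' j' : α) :
    ∑ σ : Perm α, (if σ i = j ∧ σ i' = j' then f (t * σ) else 0) =
      ∑ σ : Perm α, (if σ i = t j ∧ σ i' = t j' then f σ else 0) := by
  rw [← Equiv.sum_comp (Equiv.mulLeft t)]
  refine Finset.sum_congr rfl fun σ _ => ?_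
  have h : ∀ x, t (t x) = x := fun x => by rw [← Perm.mul_apply, ht]; rfl
  have : ∀ x y, (t x = y) ↔ (x = t y) := by
    intro x y
    constructor
    · intro h1; rw [← h1, h]
    · intro h1; rw [h1, h]
  simp only [coe_mulLeft, Perm.mul_apply, ← mul_assoc, ht, one_mul, this]

lemma U1_walk {α : Type} [Fintype α] [DecidableEq α] (f : Perm α → ℝ) (hf : f ∈ U1 α) :
    walkOp (swaps α) f ∈ U1 α := by
  intro i j
  have : ∀ σ : Perm α, (if σ i = j then walkOp (swaps α) f σ else 0) =
      ∑ t ∈ swaps α, if σ i = j then f (t * σ) else 0 := by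
    intro σ; split_ifs <;> simp [walkOp_apply]
  simp only [this]
  rw [Finset.sum_comm]
  refine Finset.sum_eq_zero fun t ht => ?_
  rw [shift1 f t (swaps_sq t ht)]
  exact hf _ _

lemma U1_bOp {α : Type} [Fintype α] [DecidableEq α] (f : Perm α → ℝ) (hf : f ∈ U1 α) :
    bOp α f ∈ U1 α :=
  (U1 α).add_mem ((U1 α).smul_mem _ (U1_walk f hf)) ((U1 α).smul_mem _ hf)

lemma sum_minor {α : Type} [Fintype α] [DecidableEq α] (h : α → α → ℝ) :
    ∑ i : α, ∑ a : {a // a ≠ i}, ∑ b : {a // a ≠ i}, h a b =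
      ((Fintype.card α : ℝ) - 2) * ∑ a, ∑ b, h a b + ∑ a, h a a := by
  have h1 : ∀ i : α, ∑ a : {a // a ≠ i}, ∑ b : {a // a ≠ i}, h a b =
      ∑ a, ∑ b, (h a b - (if a = i then h a b else 0) - (if b = i then h a b else 0)
        + (if a = i then (if b = i then h a b else 0) else 0)) := by
    intro i
    have e : ∀ g : α → ℝ, ∑ a : {a // a ≠ i}, g a = ∑ a, if a ≠ i then g a else 0 := by
      intro g
      rw [← Finset.sum_filter]
      exact (Finset.sum_subtype _ (by simp) g).symm
    rw [e (fun a => ∑ b : {a // a ≠ i}, h a b)]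
    refine Finset.sum_congr rfl fun a _ => ?_
    rw [e (fun b => h a b)]
    by_cases hai : a = i
    · simp [hai]
    · simp only [ne_eq, hai, not_false_eq_true, if_true, if_false]
      refine Finset.sum_congr rfl fun b _ => ?_
      split_ifs <;> simp_all
  simp only [h1]
  rw [Finset.sum_comm]
  have h2 : ∀ a, ∑ i, ∑ b, (h a b - (if a = i then h a b else 0) - (if b = i then h a b else 0)
        + (if a = i then (if b = i then h a b else 0) else 0)) =
      ((Fintype.card α : ℝ) - 2) * ∑ b, h a b + h a a := by
    intro a
    rw [Finset.sum_comm]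
    have : ∀ b, ∑ i, (h a b - (if a = i then h a b else 0) - (if b = i then h a b else 0)
        + (if a = i then (if b = i then h a b else 0) else 0)) =
        ((Fintype.card α : ℝ) - 2) * h a b + if b = a then h a b else 0 := by
      intro b
      simp [Finset.sum_add_distrib, Finset.sum_sub_distrib]
      ring
    simp only [this, Finset.sum_add_distrib, ← Finset.mul_sum]
    simp
  rw [Finset.sum_congr rfl (fun a _ => h2 a), Finset.sum_add_distrib, ← Finset.mul_sum]

lemma gap_case1 {α : Type} [Fintype α] [DecidableEq α] (f : Perm α → ℝ) (β : ℝ)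
    (hf : bOp α f = β • f) (hU : f ∈ U1 α) (i i' j j' : α) (hj : j ≠ j') (hi : i ≠ i')
    (hx : ∑ σ : Perm α, (if σ i = j ∧ σ i' = j' then f σ else 0) ≠ 0) :
    β ≤ ((Fintype.card α : ℝ) - 2) ^ 2 := by
  set F : α → α → ℝ := fun p q => ∑ σ : Perm α, (if σ i = p ∧ σ i' = q then f σ else 0) with hF
  have hd : ∀ p, F p p = 0 := by
    intro p
    refine Finset.sum_eq_zero fun σ _ => ?_
    rw [if_neg]
    rintro ⟨h1, h2⟩
    exact hi (σ.injective (h1.trans h2.symm))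
  have hr : ∀ p, ∑ q, F p q = 0 := by
    intro p
    rw [← hU i p, Finset.sum_comm]
    refine Finset.sum_congr rfl fun σ _ => ?_
    by_cases h : σ i = p <;> simp [h]
  have hc : ∀ q, ∑ p, F p q = 0 := by
    intro q
    rw [← hU i' q, Finset.sum_comm]
    refine Finset.sum_congr rfl fun σ _ => ?_
    by_cases h : σ i' = q <;> simp [h]
  have key : ∀ p q, p ≠ q → β * F p q =
      ((Fintype.card α : ℝ) ^ 2 - 4 * Fintype.card α + 2) * F p q + 2 * F q p := by
    intro p q hpq
    rw [← sum_swap2 F p q hpq hd hr hc]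
    have h1 : β * F p q = ∑ σ : Perm α, (if σ i = p ∧ σ i' = q then bOp α f σ else 0) := by
      rw [hf, hF, Finset.mul_sum]
      refine Finset.sum_congr rfl fun σ _ => ?_
      simp
    have h2 : ∀ σ : Perm α, (if σ i = p ∧ σ i' = q then bOp α f σ else 0) =
        ∑ a, ∑ b, if σ i = p ∧ σ i' = q then f (swap a b * σ) else 0 := by
      intro σ; split_ifs <;> simp [bOp_apply]
    rw [h1]
    simp only [h2]
    rw [Finset.sum_comm]
    refine Finset.sum_congr rfl fun a _ => ?_
    rw [Finset.sum_comm]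
    refine Finset.sum_congr rfl fun b _ => ?_
    rw [shift2 f (swap a b) (by simp)]
  have k1 := key j j' hj
  have k2 := key j' j hj.symm
  have hx' : F j j' ≠ 0 := hx
  set n : ℝ := (Fintype.card α : ℝ)
  have : (β - (n ^ 2 - 4 * n)) * (β - (n - 2) ^ 2) * F j j' = 0 := by
    linear_combination (β - (n ^ 2 - 4 * n + 2)) * k1 + 2 * k2
  rcases mul_eq_zero.mp this with h | h
  · rcases mul_eq_zero.mp h with h | h
    · nlinarith
    · linarith
  · exact absurd h hx'

lemma gap_case2 {α : Type} [Fintype α] [DecidableEq α] (hn : 3 ≤ Fintype.card α)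
    (ih : ∀ i : α, ∀ f ∈ U1 {a // a ≠ i}, ∑ σ, f σ * bOp {a // a ≠ i} f σ ≤
      ((Fintype.card α : ℝ) - 3) ^ 2 * ∑ σ, f σ ^ 2)
    (f : Perm α → ℝ) (β : ℝ) (hf : bOp α f = β • f) (hne : f ≠ 0)
    (hU : ∀ i i' j j' : α, j ≠ j' → i ≠ i' →
      ∑ σ : Perm α, (if σ i = j ∧ σ i' = j' then f σ else 0) = 0) :
    β ≤ ((Fintype.card α : ℝ) - 2) ^ 2 := by
  have h1 : ∀ i : α, ∑ σ, f σ * ∑ a : {a // a ≠ i}, ∑ b : {a // a ≠ i}, f (swap (a : α) (b : α) * σ) ≤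
      ((Fintype.card α : ℝ) - 3) ^ 2 * ∑ σ, f σ ^ 2 := by
    intro i
    rw [sum_coset i, sum_coset i (fun σ => f σ ^ 2), Finset.mul_sum]
    refine Finset.sum_le_sum fun k _ => ?_
    have hmem : (fun ρ : Perm {a // a ≠ i} => f (Perm.ofSubtype ρ * swap k i)) ∈ U1 {a // a ≠ i} := by
      intro p q
      have hp := p.2
      have hq := q.2
      refine Eq.trans ?_ (hU k (swap k i p) i q hq.symm (by
        intro h
        have := congrArg (swap k i) h
        simp at this
        exact hp this.symm))
      rw [sum_coset i, Finset.sum_comm]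
      refine Finset.sum_congr rfl fun ρ _ => ?_
      have hi : ∀ ρ : Perm {a // a ≠ i}, Perm.ofSubtype ρ i = i := fun ρ =>
        Perm.ofSubtype_apply_of_not_mem ρ (by simp)
      rw [Finset.sum_eq_single k]
      · have : (ρ p = q) ↔ (Perm.ofSubtype ρ * swap k i) k = i ∧
          (Perm.ofSubtype ρ * swap k i) (swap k i p) = q := by
          simp [hi, Subtype.ext_iff]
        exact if_congr this rfl rfl
      · intro k' _ hk'
        rw [if_neg]
        rintro ⟨h, -⟩
        apply hk'
        have h2 : (Perm.ofSubtype ρ * swap k' i) k' = i := by simp [hi]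
        exact (Perm.ofSubtype ρ * swap k' i).injective (h2.trans h.symm)
      · simp
    have := ih i _ hmem
    refine le_trans (le_of_eq ?_) this
    refine Finset.sum_congr rfl fun ρ _ => ?_
    rw [bOp_apply]
    simp only [map_mul, Perm.ofSubtype_swap_eq, mul_assoc]
  have h2 : ∑ i : α, ∑ σ, f σ * ∑ a : {a // a ≠ i}, ∑ b : {a // a ≠ i}, f (swap (a : α) (b : α) * σ) =
      (((Fintype.card α : ℝ) - 2) * β + Fintype.card α) * ∑ σ, f σ ^ 2 := by
    rw [Finset.sum_comm, Finset.mul_sum]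
    refine Finset.sum_congr rfl fun σ _ => ?_
    rw [← Finset.mul_sum, sum_minor (fun a b => f (swap a b * σ)), ← bOp_apply, hf]
    simp only [swap_self, ← Perm.one_def, one_mul, Finset.sum_const, Finset.card_univ, nsmul_eq_mul,
      Pi.smul_apply, smul_eq_mul]
    ring
  have h3 : ∑ i : α, ∑ σ, f σ * ∑ a : {a // a ≠ i}, ∑ b : {a // a ≠ i}, f (swap (a : α) (b : α) * σ) ≤
      ∑ i : α, ((Fintype.card α : ℝ) - 3) ^ 2 * ∑ σ, f σ ^ 2 := Finset.sum_le_sum fun i _ => h1 i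
  rw [h2, Finset.sum_const, Finset.card_univ, nsmul_eq_mul, ← mul_assoc] at h3
  have hpos : 0 < ∑ σ, f σ ^ 2 := by
    obtain ⟨σ, hσ⟩ := Function.ne_iff.mp hne
    exact Finset.sum_pos' (fun _ _ => sq_nonneg _) ⟨σ, Finset.mem_univ _, sq_pos_iff.mpr (by simpa using hσ)⟩
  have h4 := le_of_mul_le_mul_right h3 hpos
  have hn' : (3:ℝ) ≤ Fintype.card α := by exact_mod_cast hn
  set n : ℝ := (Fintype.card α : ℝ)
  have : (n - 2) * β ≤ (n - 2) * (n * (n - 4)) := by nlinarith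
  have := le_of_mul_le_mul_left this (by linarith)
  nlinarith

lemma gap (n : ℕ) : ∀ (α : Type) [Fintype α] [DecidableEq α], Fintype.card α = n →
    ∀ f ∈ U1 α, ∑ σ, f σ * bOp α f σ ≤ ((n : ℝ) - 2) ^ 2 * ∑ σ, f σ ^ 2 := by
  induction n with
  | zero =>
    intro α _ _ hα f hf
    have : IsEmpty α := Fintype.card_eq_zero_iff.mp hα
    simp [bOp_apply]
    positivity
  | succ n ih =>
    intro α _ _ hα f hf
    by_cases hn : n + 1 ≤ 2
    · have hz : f = 0 := by
        ext σ
        have : Nonempty α := Fintype.card_pos_iff.mp (by omega)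
        obtain ⟨i⟩ := this
        have h := hf i (σ i)
        rw [Finset.sum_eq_single σ] at h
        · simpa using h
        · intro σ' _ hne
          rw [if_neg]
          intro h
          apply hne
          ext x
          by_contra hx
          have hxi : x ≠ i := by rintro rfl; exact hx h
          have h2 : σ' x ≠ σ i := by
            rw [← h]; exact fun h' => hxi (σ'.injective h')
          have h3 : σ x ≠ σ i := fun h' => hxi (σ.injective h')
          have := Finset.card_le_univ ({σ' x, σ x, σ i} : Finset α)
          rw [Finset.card_eq_three.mpr ⟨σ' x, σ x, σ i, hx, h2, h3, rfl⟩] at this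
          omega
        · simp
      simp [hz]
    · rw [← hα]
      refine spec_rayleigh (bOp α) bOp_symm (U1 α) U1_bOp _ ?_ f hf
      intro β e heU hne he
      by_cases hc : ∀ i i' j j' : α, j ≠ j' → i ≠ i' →
        ∑ σ : Perm α, (if σ i = j ∧ σ i' = j' then e σ else 0) = 0
      · refine gap_case2 (by omega) ?_ e β he hne hc
        intro i f hf
        have := ih {a // a ≠ i} (by rw [Fintype.card_subtype_compl]; simp [hα]) f hf
        rw [hα]
        push_cast
        convert this using 2
        ring
      · push Not at hc
        obtain ⟨i, i', j, j', hj, hi, hx⟩ := hc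
        exact gap_case1 e β he heU i i' j j' hj hi hx

lemma card_swaps {α : Type} [Fintype α] [DecidableEq α] :
    ((swaps α).card : ℝ) = (Fintype.card α : ℝ) * (Fintype.card α - 1) / 2 := by
  have := sum_swaps (α := α) (fun _ => 1)
  simp at this
  linarith

noncomputable def sgL (α : Type) [Fintype α] [DecidableEq α] : (Perm α → ℝ) →ₗ[ℝ] (Perm α → ℝ) where
  toFun f := fun σ => sg Perm.sign σ * f σ
  map_add' f g := by ext x; simp [mul_add]
  map_smul' c f := by ext x; simp; ring

lemma walk_sgL {α : Type} [Fintype α] [DecidableEq α] (f : Perm α → ℝ) :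
    walkOp (swaps α) (sgL α f) = - sgL α (walkOp (swaps α) f) := by
  ext σ
  exact walkOp_sg (swaps α) Perm.sign swaps_sign f σ

lemma sgL_sgL {α : Type} [Fintype α] [DecidableEq α] (f : Perm α → ℝ) :
    sgL α (sgL α f) = f := by
  ext σ
  simp only [sgL, LinearMap.coe_mk, AddHom.coe_mk]
  linear_combination f σ * sg_sq Perm.sign σ

lemma walk_bound {α : Type} [Fintype α] [DecidableEq α] (e : Perm α → ℝ) (he : e ∈ U1 α)
    (hne : e ≠ 0) (μ : ℝ) (hμ : walkOp (swaps α) e = μ • e) :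
    μ ≤ ((Fintype.card α : ℝ) - 1) * (Fintype.card α - 4) / 2 := by
  have h := gap _ α rfl e he
  have hb : bOp α e = (2 * μ + Fintype.card α) • e := by
    simp only [bOp, LinearMap.add_apply, LinearMap.smul_apply, LinearMap.id_apply, hμ, smul_smul,
      add_smul]
  have hpos : 0 < ∑ σ, e σ ^ 2 := by
    obtain ⟨σ, hσ⟩ := Function.ne_iff.mp hne
    exact Finset.sum_pos' (fun _ _ => sq_nonneg _) ⟨σ, Finset.mem_univ _, sq_pos_iff.mpr (by simpa using hσ)⟩
  have h2 : ∑ σ, e σ * bOp α e σ = (2 * μ + Fintype.card α) * ∑ σ, e σ ^ 2 := by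
    rw [hb, Finset.mul_sum]
    exact Finset.sum_congr rfl fun σ _ => by simp; ring
  rw [h2] at h
  have := le_of_mul_le_mul_right h hpos
  linarith

noncomputable def fixN {α : Type} [Fintype α] [DecidableEq α] (σ : Perm α) : ℝ :=
  ∑ k, if σ k = k then 1 else 0

noncomputable def chi {α : Type} [Fintype α] [DecidableEq α] (σ : Perm α) : ℝ := fixN σ - 1

lemma walk_chi {α : Type} [Fintype α] [DecidableEq α] :
    walkOp (swaps α) (chi (α := α)) =
      ((Fintype.card α : ℝ) * (Fintype.card α - 3) / 2) • chi := by
  ext σ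
  have h1 : bOp α chi σ = ((Fintype.card α : ℝ) ^ 2 - 2 * Fintype.card α) * chi σ := by
    rw [bOp_apply]
    simp only [chi, fixN, Finset.sum_sub_distrib]
    have : ∑ a : α, ∑ b : α, ∑ k, (if (swap a b * σ) k = k then (1:ℝ) else 0) =
        ((Fintype.card α : ℝ) ^ 2 - 2 * Fintype.card α) * ∑ k, (if σ k = k then (1:ℝ) else 0)
          + 2 * Fintype.card α := by
      rw [Finset.sum_congr rfl (fun a _ => Finset.sum_comm), Finset.sum_comm]
      have h2 : ∀ k : α, ∑ a : α, ∑ b : α, (if (swap a b * σ) k = k then (1:ℝ) else 0) =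
          ((Fintype.card α : ℝ) ^ 2 - 2 * Fintype.card α) * (if σ k = k then (1:ℝ) else 0) + 2 := by
        intro k
        have := sum_swap1 (fun x => if x = k then (1:ℝ) else 0) (σ k)
        refine Eq.trans this ?_
        simp
      simp only [h2, Finset.sum_add_distrib, ← Finset.mul_sum]
      simp; ring
    rw [this]; simp; ring
  have h2 : bOp α chi σ = 2 * walkOp (swaps α) chi σ + Fintype.card α * chi σ := by
    simp [bOp]
  simp only [Pi.smul_apply, smul_eq_mul]
  linarith

lemma walk_one {α : Type} [Fintype α] [DecidableEq α] :
    walkOp (swaps α) (fun _ => (1:ℝ)) =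
      ((Fintype.card α : ℝ) * (Fintype.card α - 1) / 2) • (fun _ => (1:ℝ)) := by
  ext x
  rw [← card_swaps]; simp [walkOp_apply]

lemma sum_one1 {α : Type} [Fintype α] [DecidableEq α] (i j : α) :
    (Fintype.card α : ℝ) * ∑ σ : Perm α, (if σ i = j then (1:ℝ) else 0) = (Fintype.card α).factorial := by
  have h1 : ∀ j', ∑ σ : Perm α, (if σ i = j' then (1:ℝ) else 0) =
      ∑ σ : Perm α, (if σ i = j then (1:ℝ) else 0) := by
    intro j'
    have := shift1 (fun _ => (1:ℝ)) (swap j j') (by simp) i j'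
    rw [this]; simp
  have h2 : ∑ j', ∑ σ : Perm α, (if σ i = j' then (1:ℝ) else 0) = (Fintype.card α).factorial := by
    rw [Finset.sum_comm]; simp [Fintype.card_perm]
  rw [Finset.sum_congr rfl (fun j' _ => h1 j')] at h2
  simpa using h2

lemma sum_one2 {α : Type} [Fintype α] [DecidableEq α] (i k j l : α) (hik : i ≠ k) (hjl : j ≠ l) :
    ((Fintype.card α : ℝ) - 1) * ∑ σ : Perm α, (if σ i = j ∧ σ k = l then (1:ℝ) else 0) =
      ∑ σ : Perm α, (if σ i = j then (1:ℝ) else 0) := by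
  have h1 : ∀ l', l' ≠ j → ∑ σ : Perm α, (if σ i = j ∧ σ k = l' then (1:ℝ) else 0) =
      ∑ σ : Perm α, (if σ i = j ∧ σ k = l then (1:ℝ) else 0) := by
    intro l' hl'
    have := shift2 (fun _ => (1:ℝ)) (swap l l') (by simp) i j k l'
    rw [this]; simp [swap_apply_of_ne_of_ne hjl hl'.symm]
  have h0 : ∑ σ : Perm α, (if σ i = j ∧ σ k = j then (1:ℝ) else 0) = 0 := by
    refine Finset.sum_eq_zero fun σ _ => ?_
    rw [if_neg]
    rintro ⟨h1, h2⟩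
    exact hik (σ.injective (h1.trans h2.symm))
  have h2 : ∑ l', ∑ σ : Perm α, (if σ i = j ∧ σ k = l' then (1:ℝ) else 0) =
      ∑ σ : Perm α, (if σ i = j then (1:ℝ) else 0) := by
    rw [Finset.sum_comm]
    refine Finset.sum_congr rfl fun σ _ => ?_
    by_cases h : σ i = j <;> simp [h]
  rw [← h2, ← Finset.add_sum_erase _ _ (Finset.mem_univ j), h0,
    Finset.sum_congr rfl (fun l' hl' => h1 l' (Finset.ne_of_mem_erase hl'))]
  simp [Finset.card_erase_of_mem]
  left
  rw [Nat.cast_sub (Fintype.card_pos_iff.mpr ⟨i⟩)]; simp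

lemma sum_sg2 {α : Type} [Fintype α] [DecidableEq α] (hn : 4 ≤ Fintype.card α) (i k j l : α) :
    ∑ σ : Perm α, (if σ i = j ∧ σ k = l then sg Perm.sign σ else 0) = 0 := by
  have : 1 < (Finset.univ \ {j, l} : Finset α).card := by
    have h1 := Finset.le_card_sdiff ({j, l} : Finset α) Finset.univ
    have h2 := Finset.card_le_two (a := j) (b := l)
    rw [Finset.card_univ] at h1
    omega
  obtain ⟨p, hp, q, hq, hpq⟩ := Finset.one_lt_card.mp this
  simp at hp hq
  have h := shift2 (sg Perm.sign) (swap p q) (by simp) i j k l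
  rw [swap_apply_of_ne_of_ne (Ne.symm hp.1) (Ne.symm hq.1),
    swap_apply_of_ne_of_ne (Ne.symm hp.2) (Ne.symm hq.2)] at h
  have h3 : ∀ σ : Perm α, sg Perm.sign (swap p q * σ) = - sg Perm.sign σ := by
    intro σ
    rw [sg_mul, sg_neg _ _ (Perm.sign_swap hpq)]; ring
  have h4 : ∑ σ : Perm α, (if σ i = j ∧ σ k = l then sg Perm.sign (swap p q * σ) else 0) =
      - ∑ σ : Perm α, (if σ i = j ∧ σ k = l then sg Perm.sign σ else 0) := by
    rw [← Finset.sum_neg_distrib]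
    refine Finset.sum_congr rfl fun σ _ => ?_
    rw [h3]; split_ifs <;> simp
  linarith

lemma sum_fix_ite {α : Type} [Fintype α] [DecidableEq α] (g : Perm α → ℝ) (i j : α) :
    ∑ σ : Perm α, (if σ i = j then g σ * fixN σ else 0) =
      ∑ k, ∑ σ : Perm α, (if σ i = j ∧ σ k = k then g σ else 0) := by
  rw [Finset.sum_comm]
  refine Finset.sum_congr rfl fun σ _ => ?_
  by_cases h : σ i = j
  · simp only [h, if_true, true_and, fixN, Finset.mul_sum, mul_ite, mul_one, mul_zero]
  · simp [h]

lemma sum_fix {α : Type} [Fintype α] [DecidableEq α] (hn : 2 ≤ Fintype.card α) (i j : α) :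
    ((Fintype.card α : ℝ) - 1) * ∑ σ : Perm α, (if σ i = j then chi σ else 0) =
      (if i = j then (Fintype.card α : ℝ) - 1 else -1) * ∑ σ : Perm α, (if σ i = j then (1:ℝ) else 0) := by
  set N := ∑ σ : Perm α, (if σ i = j then (1:ℝ) else 0) with hN
  have h0 : ∑ σ : Perm α, (if σ i = j then chi σ else 0) =
      ∑ k, ∑ σ : Perm α, (if σ i = j ∧ σ k = k then (1:ℝ) else 0) - N := by
    rw [← sum_fix_ite (fun _ => 1), ← Finset.sum_sub_distrib]
    refine Finset.sum_congr rfl fun σ _ => ?_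
    split_ifs <;> simp [chi]
  have h1 : ∀ k, ((Fintype.card α : ℝ) - 1) * ∑ σ : Perm α, (if σ i = j ∧ σ k = k then (1:ℝ) else 0) =
      N + (if k = i then (if i = j then ((Fintype.card α : ℝ) - 1) * N else 0) - N else 0)
        + (if k = j then (if i = j then 0 else - N) else 0) := by
    intro k
    by_cases hk : k = i
    · subst hk
      by_cases hj : k = j
      · subst hj
        simp [hN]
      · have : ∀ σ : Perm α, ¬ (σ k = j ∧ σ k = k) := fun σ h => hj (h.2.symm.trans h.1)
        simp [this, hj]
    · by_cases hj : k = j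
      · subst hj
        have : ∀ σ : Perm α, ¬ (σ i = k ∧ σ k = k) := fun σ h => hk (σ.injective (h.2.trans h.1.symm))
        simp [this, hk, Ne.symm hk]
      · rw [sum_one2 i k j k (Ne.symm hk) (Ne.symm hj)]
        simp [hk, hj, hN]
  rw [h0, mul_sub, Finset.mul_sum, Finset.sum_congr rfl (fun k _ => h1 k)]
  simp only [Finset.sum_add_distrib, Finset.sum_ite_eq', Finset.mem_univ, if_true, Finset.sum_const,
    Finset.card_univ, nsmul_eq_mul]
  split_ifs <;> ring

lemma perm_count {α : Type} [Fintype α] [DecidableEq α] (hn : 4 ≤ Fintype.card α) (M : ℝ) (hM : 0 < M)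
    (hM' : ((Fintype.card α : ℝ) - 1) * (Fintype.card α - 4) / 2 < M) :
    ∃ r : ℕ → ℝ, Tendsto (fun b : ℕ => r b / M ^ b) atTop (𝓝 0) ∧
      ∀ b, Even b → (cnt (swaps α) b : ℝ) =
        2 / ((Fintype.card α).factorial : ℝ) * ((Fintype.card α : ℝ) * (Fintype.card α - 1) / 2) ^ b
        + 2 * ((Fintype.card α : ℝ) - 1) ^ 2 / ((Fintype.card α).factorial : ℝ) *
          ((Fintype.card α : ℝ) * (Fintype.card α - 3) / 2) ^ b + r b := by
  set n : ℝ := (Fintype.card α : ℝ) with hnn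
  have hn4 : (4:ℝ) ≤ n := by rw [hnn]; exact_mod_cast hn
  set N : ℝ := ((Fintype.card α).factorial : ℝ) with hNN
  have hNpos : 0 < N := by rw [hNN]; exact_mod_cast Nat.factorial_pos _
  let V : Submodule ℝ (Perm α → ℝ) := U1 α ⊓ (U1 α).comap (sgL α)
  have hV : ∀ f ∈ V, walkOp (swaps α) f ∈ V := by
    rintro f ⟨h1, h2⟩
    refine ⟨U1_walk f h1, ?_⟩
    have := U1_walk _ h2
    rw [walk_sgL] at this
    simpa using (U1 α).neg_mem this
  let u : Perm α → ℝ := (1 / N) • (fun _ => (1:ℝ)) + ((n - 1) / N) • chi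
  let w : Perm α → ℝ := Pi.single 1 1 - u - sgL α u
  have hsw : sgL α w = w := by
    have : sgL α (Pi.single 1 1) = Pi.single 1 1 := by
      ext σ
      by_cases h : σ = 1
      · subst h; simp [sgL, sg_one]
      · simp [sgL, Pi.single_apply, h]
    simp only [w, map_sub, sgL_sgL, this]
    abel
  have hwU : w ∈ U1 α := by
    intro i j
    have e1 : ∑ σ : Perm α, (if σ i = j then (Pi.single (1 : Perm α) (1:ℝ) : Perm α → ℝ) σ else 0) =
        if i = j then 1 else 0 := by
      rw [Finset.sum_eq_single 1]
      · simp
      · intro σ _ h; simp [Pi.single_apply, h]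
      · simp
    have e2 : ∑ σ : Perm α, (if σ i = j then u σ else 0) = if i = j then 1 else 0 := by
      have a1 := sum_one1 i j
      have a2 := sum_fix (by omega) i j
      rw [← hnn] at a1 a2
      rw [← hNN] at a1
      set N1 := ∑ σ : Perm α, (if σ i = j then (1:ℝ) else 0)
      set C1 := ∑ σ : Perm α, (if σ i = j then chi σ else 0) with hC1
      have : ∑ σ : Perm α, (if σ i = j then u σ else 0) = (1 / N) * N1 + ((n - 1) / N) * C1 := by
        simp only [N1, C1, Finset.mul_sum, ← Finset.sum_add_distrib]
        refine Finset.sum_congr rfl fun σ _ => ?_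
        split_ifs <;> simp [u]
      rw [this]
      have : (1 / N) * N1 + ((n - 1) / N) * C1 = (N1 + (n - 1) * C1) / N := by ring
      rw [this, a2, ← a1]
      have hN1 : N1 ≠ 0 := by rintro h; rw [h] at a1; simp at a1; linarith
      split_ifs
      · field_simp; ring
      · simp
    have e3 : ∑ σ : Perm α, (if σ i = j then sgL α u σ else 0) = 0 := by
      have a1 := sum_sg2 hn i i j j
      simp only [and_self] at a1
      have a2 := sum_fix_ite (sg Perm.sign) i j
      rw [Finset.sum_eq_zero (fun k _ => sum_sg2 hn i k j k)] at a2
      have : ∑ σ : Perm α, (if σ i = j then sgL α u σ else 0) =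
          (1 / N - (n - 1) / N) * ∑ σ : Perm α, (if σ i = j then sg Perm.sign σ else 0)
          + ((n - 1) / N) * ∑ σ : Perm α, (if σ i = j then sg Perm.sign σ * fixN σ else 0) := by
        simp only [Finset.mul_sum, ← Finset.sum_add_distrib]
        refine Finset.sum_congr rfl fun σ _ => ?_
        split_ifs
        · simp [u, sgL, chi]; ring
        · simp
      rw [this, a1, a2]; ring
    have : ∀ σ : Perm α, (if σ i = j then w σ else 0) =
        (if σ i = j then (Pi.single (1 : Perm α) (1:ℝ) : Perm α → ℝ) σ else 0)
        - (if σ i = j then u σ else 0) - (if σ i = j then sgL α u σ else 0) := by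
      intro σ; split_ifs <;> simp [w]
    simp only [this, Finset.sum_sub_distrib, e1, e2, e3]
    ring
  have hw : w ∈ V := ⟨hwU, by simpa [hsw] using hwU⟩
  refine ⟨fun b => (walkOp (swaps α) ^ b) w 1, ?_, ?_⟩
  · refine spec_pow (walkOp (swaps α)) (walkOp_symm _ swaps_sq) V hV _ hM ?_ w hw 1
    rintro μ e ⟨h1, h2⟩ hne he
    rw [abs_lt]
    constructor
    · have h3 : walkOp (swaps α) (sgL α e) = (-μ) • sgL α e := by
        rw [walk_sgL, he]; simp
      have h4 : sgL α e ≠ 0 := by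
        intro h; apply hne; rw [← sgL_sgL e, h, map_zero]
      have := walk_bound _ h2 h4 _ h3
      linarith
    · have := walk_bound _ h1 hne _ he
      linarith
  · intro b hb
    have hd : (Pi.single 1 1 : Perm α → ℝ) = w + (1 / N) • (fun _ => (1:ℝ)) + ((n - 1) / N) • chi
        + (1 / N) • sgL α (fun _ => (1:ℝ)) + ((n - 1) / N) • sgL α chi := by
      simp only [w, u, map_add, map_smul]; abel
    have s1 : walkOp (swaps α) (sgL α (fun _ => (1:ℝ))) = (-(n * (n - 1) / 2)) • sgL α (fun _ => (1:ℝ)) := by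
      rw [walk_sgL, walk_one]; simp [← hnn]
    have s2 : walkOp (swaps α) (sgL α chi) = (-(n * (n - 3) / 2)) • sgL α chi := by
      rw [walk_sgL, walk_chi]; simp [← hnn]
    rw [cnt_eq, hd]
    simp only [map_add, map_smul]
    rw [pow_eigen _ _ _ walk_one, pow_eigen _ _ _ walk_chi, pow_eigen _ _ _ s1, pow_eigen _ _ _ s2,
      hb.neg_pow, hb.neg_pow, ← hnn]
    have c1 : chi (1 : Perm α) = n - 1 := by simp [chi, fixN, hnn]
    simp [sgL, sg_one, c1]
    ring

def QS {α : Type} [Fintype α] [DecidableEq α] (S : Finset α) : Finset (Perm α) :=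
  (swaps α).filter fun t => ∀ x, x ∈ S ↔ t x ∈ S

lemma swap_pres {α : Type} [DecidableEq α] (S : Finset α) (a b : α) :
    (∀ x, x ∈ S ↔ swap a b x ∈ S) ↔ (a ∈ S ↔ b ∈ S) := by
  constructor
  · intro h; simpa using h a
  · intro h x
    rw [swap_apply_def]
    split_ifs <;> simp_all

lemma mem_QS {α : Type} [Fintype α] [DecidableEq α] (S : Finset α) (t : Perm α) :
    t ∈ QS S ↔ ∃ a b, a ≠ b ∧ t = swap a b ∧ (a ∈ S ↔ b ∈ S) := by
  simp only [QS, Finset.mem_filter, mem_swaps]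
  constructor
  · rintro ⟨⟨a, b, hab, rfl⟩, h⟩
    exact ⟨a, b, hab, rfl, (swap_pres S a b).mp h⟩
  · rintro ⟨a, b, hab, rfl, h⟩
    exact ⟨⟨a, b, hab, rfl⟩, (swap_pres S a b).mpr h⟩

lemma swap_mem_QS {α : Type} [Fintype α] [DecidableEq α] (S : Finset α) (a b : α) (hab : a ≠ b) :
    swap a b ∈ QS S ↔ (a ∈ S ↔ b ∈ S) := by
  simp only [QS, Finset.mem_filter, mem_swaps, swap_pres, and_iff_right_iff_imp]
  intro _
  exact ⟨a, b, hab, rfl⟩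

lemma card_QS {α : Type} [Fintype α] [DecidableEq α] (S : Finset α) :
    2 * ((QS S).card : ℝ) + Fintype.card α = (S.card : ℝ) ^ 2 + ((Fintype.card α : ℝ) - S.card) ^ 2 := by
  have h := sum_swaps (α := α) (fun t => if ∀ x, x ∈ S ↔ t x ∈ S then 1 else 0)
  have h1 : ∑ t ∈ swaps α, (if ∀ x, x ∈ S ↔ t x ∈ S then (1:ℝ) else 0) = (QS S).card := by
    simp [QS]
  rw [h1] at h
  simp only [swap_pres] at h
  have h2 : ∀ a b : α, (if (a ∈ S ↔ b ∈ S) then (1:ℝ) else 0) =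
      (if a ∈ S then 1 else 0) * (if b ∈ S then 1 else 0) +
      (1 - (if a ∈ S then 1 else 0)) * (1 - (if b ∈ S then 1 else 0)) := by
    intro a b; split_ifs <;> simp_all
  have h3 : ∑ a : α, (if a ∈ S then (1:ℝ) else 0) = S.card := by simp
  simp only [h2, Finset.sum_add_distrib, ← Finset.sum_mul_sum, Finset.sum_sub_distrib, h3] at h
  simp at h
  linarith

lemma cnt_image {G H : Type} [Group G] [Fintype G] [DecidableEq G] [Group H] [Fintype H]
    [DecidableEq H] (φ : H →* G) (hφ : Function.Injective φ) (T : Finset H) (b : ℕ) :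
    cnt (T.image φ) b = cnt T b := by
  symm
  refine Finset.card_bij (fun τ _ => φ ∘ τ) ?_ ?_ ?_
  · intro τ hτ
    simp only [Finset.mem_filter, Finset.mem_univ, true_and] at hτ ⊢
    refine ⟨fun i => Finset.mem_image_of_mem _ (hτ.1 i), ?_⟩
    rw [← List.map_ofFn, ← map_list_prod, hτ.2, map_one]
  · intro τ _ τ' _ h
    exact hφ.comp_left h
  · intro τ hτ
    simp only [Finset.mem_filter, Finset.mem_univ, true_and, Finset.mem_image] at hτ
    choose τ' h1 h2 using hτ.1
    have h3 : φ ∘ τ' = τ := funext h2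
    refine ⟨τ', ?_, h3⟩
    simp only [Finset.mem_filter, Finset.mem_univ, true_and]
    refine ⟨h1, hφ ?_⟩
    rw [map_list_prod, List.map_ofFn, h3, hτ.2, map_one]

lemma QS_one {α : Type} [Fintype α] [DecidableEq α] (i : α) :
    QS {i} = (swaps {a // a ≠ i}).image Perm.ofSubtype := by
  ext t
  simp only [mem_QS, Finset.mem_image, mem_swaps, Finset.mem_singleton]
  constructor
  · rintro ⟨a, b, hab, rfl, h⟩
    have ha : a ≠ i := by rintro rfl; exact hab (h.mp rfl).symm
    have hb : b ≠ i := fun h' => ha (h.mpr h')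
    exact ⟨swap ⟨a, ha⟩ ⟨b, hb⟩, ⟨_, _, by simpa using hab, rfl⟩, by simp [Perm.ofSubtype_swap_eq]⟩
  · rintro ⟨_, ⟨⟨a, ha⟩, ⟨b, hb⟩, hab, rfl⟩, rfl⟩
    exact ⟨a, b, by simpa using hab, by simp [Perm.ofSubtype_swap_eq], by simp [ha, hb]⟩

lemma cnt_QS_one {α : Type} [Fintype α] [DecidableEq α] (i : α) (b : ℕ) :
    cnt (QS {i}) b = cnt (swaps {a // a ≠ i}) b := by
  rw [QS_one, cnt_image _ Perm.ofSubtype_injective]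

lemma congr_left {α : Type} [Fintype α] [DecidableEq α] (S : Finset α) (a b : {a // a ∈ S}) :
    Perm.subtypeCongrHom (fun a => a ∈ S) (swap a b, 1) = swap (a : α) (b : α) := by
  ext x
  simp only [Perm.subtypeCongrHom, MonoidHom.coe_mk, OneHom.coe_mk]
  by_cases hx : x ∈ S
  · rw [Perm.subtypeCongr.left_apply _ _ hx]
    obtain ⟨a, ha⟩ := a
    obtain ⟨b, hb⟩ := b
    simp only [swap_apply_def, Subtype.mk.injEq]
    split_ifs <;> rfl
  · rw [Perm.subtypeCongr.right_apply _ _ hx, swap_apply_of_ne_of_ne]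
    · simp
    · rintro rfl; exact hx a.2
    · rintro rfl; exact hx b.2

lemma congr_right {α : Type} [Fintype α] [DecidableEq α] (S : Finset α) (a b : {a // ¬ a ∈ S}) :
    Perm.subtypeCongrHom (fun a => a ∈ S) (1, swap a b) = swap (a : α) (b : α) := by
  ext x
  simp only [Perm.subtypeCongrHom, MonoidHom.coe_mk, OneHom.coe_mk]
  by_cases hx : x ∈ S
  · rw [Perm.subtypeCongr.left_apply _ _ hx, swap_apply_of_ne_of_ne]
    · simp
    · rintro rfl; exact a.2 hx
    · rintro rfl; exact b.2 hx
  · rw [Perm.subtypeCongr.right_apply _ _ hx]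
    obtain ⟨a, ha⟩ := a
    obtain ⟨b, hb⟩ := b
    simp only [swap_apply_def, Subtype.mk.injEq]
    split_ifs <;> rfl

lemma cnt_QS_asymp {α : Type} [Fintype α] [DecidableEq α] (S : Finset α) (hne : (QS S).Nonempty) :
    ∃ r : ℕ → ℝ, Tendsto (fun b : ℕ => r b / ((QS S).card : ℝ) ^ b) atTop (𝓝 0) ∧
      ∀ b, Even b → (cnt (QS S) b : ℝ) =
        2 / ((S.card.factorial * (Fintype.card α - S.card).factorial : ℕ) : ℝ) * ((QS S).card : ℝ) ^ b + r b := by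
  let φ := Perm.subtypeCongrHom (fun a => a ∈ S)
  have hφ : Function.Injective φ := Perm.subtypeCongrHom_injective _
  let T : Finset (Perm {a // a ∈ S} × Perm {a // ¬ a ∈ S}) := Finset.univ.filter fun k => φ k ∈ QS S
  have hl : ∀ a b : {a // a ∈ S}, a ≠ b → ((swap a b, 1) : Perm {a // a ∈ S} × Perm {a // ¬ a ∈ S}) ∈ T := by
    intro a b hab
    simp only [T, Finset.mem_filter, Finset.mem_univ, true_and, φ, congr_left]
    rw [swap_mem_QS _ _ _ (fun h => hab (Subtype.ext h))]
    simp
  have hr : ∀ a b : {a // ¬ a ∈ S}, a ≠ b → ((1, swap a b) : Perm {a // a ∈ S} × Perm {a // ¬ a ∈ S}) ∈ T := by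
    intro a b hab
    simp only [T, Finset.mem_filter, Finset.mem_univ, true_and, φ, congr_right]
    rw [swap_mem_QS _ _ _ (fun h => hab (Subtype.ext h))]
    simp [a.2, b.2]
  have him : T.image φ = QS S := by
    ext t
    simp only [Finset.mem_image, T, Finset.mem_filter, Finset.mem_univ, true_and]
    constructor
    · rintro ⟨k, h, rfl⟩; exact h
    · intro ht
      obtain ⟨a, b, hab, rfl, h⟩ := (mem_QS S t).mp ht
      by_cases ha : a ∈ S
      · refine ⟨(swap ⟨a, ha⟩ ⟨b, h.mp ha⟩, 1), ?_, ?_⟩ <;> simp only [φ, congr_left]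
        exact ht
      · refine ⟨(1, swap ⟨a, ha⟩ ⟨b, fun hb => ha (h.mpr hb)⟩), ?_, ?_⟩ <;> simp only [φ, congr_right]
        exact ht
  have hsw : ∀ t ∈ T, φ t ∈ swaps α := by
    intro t ht
    exact (Finset.mem_filter.mp (Finset.mem_filter.mp ht).2).1
  have hcT : T.card = (QS S).card := by rw [← him, Finset.card_image_of_injective _ hφ]
  have hgen : Subgroup.closure (T : Set (Perm {a // a ∈ S} × Perm {a // ¬ a ∈ S})) = ⊤ := by
    rw [eq_top_iff]
    rintro ⟨σ, τ⟩ -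
    have h1 : ∀ σ : Perm {a // a ∈ S}, ((σ, 1) : Perm {a // a ∈ S} × Perm {a // ¬ a ∈ S}) ∈
        Subgroup.closure (T : Set (Perm {a // a ∈ S} × Perm {a // ¬ a ∈ S})) := by
      intro σ
      induction σ using Perm.swap_induction_on with
      | one => exact Subgroup.one_mem _
      | swap_mul f x y hxy ih =>
        have := Subgroup.mul_mem _ (Subgroup.subset_closure (hl x y hxy)) ih
        simpa using this
    have h2 : ∀ τ : Perm {a // ¬ a ∈ S}, ((1, τ) : Perm {a // a ∈ S} × Perm {a // ¬ a ∈ S}) ∈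
        Subgroup.closure (T : Set (Perm {a // a ∈ S} × Perm {a // ¬ a ∈ S})) := by
      intro σ
      induction σ using Perm.swap_induction_on with
      | one => exact Subgroup.one_mem _
      | swap_mul f x y hxy ih =>
        have := Subgroup.mul_mem _ (Subgroup.subset_closure (hr x y hxy)) ih
        simpa using this
    simpa using Subgroup.mul_mem _ (h1 σ) (h2 τ)
  obtain ⟨r, hr1, hr2⟩ := perron T (fun t ht => hφ (by rw [map_mul, swaps_sq _ (hsw t ht), map_one]))
    (Perm.sign.comp φ) (fun t ht => swaps_sign _ (hsw t ht))
    (by rw [← him] at hne; exact Finset.image_nonempty.mp hne) hgen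
  rw [hcT] at hr1 hr2
  refine ⟨r, hr1, fun b hb => ?_⟩
  have hc := hr2 b hb
  have hcard : Fintype.card (Perm {a // a ∈ S} × Perm {a // ¬ a ∈ S}) =
      S.card.factorial * (Fintype.card α - S.card).factorial := by
    rw [Fintype.card_prod, Fintype.card_perm, Fintype.card_perm, Fintype.card_subtype_compl]
    simp
  rw [hcard] at hc
  rw [← hc, ← cnt_image φ hφ T b, him]

lemma trans_pres {α : Type} [Fintype α] [DecidableEq α] {b : ℕ} (τ : Fin b → Perm α)
    (h : ∀ x y, ∃ σ ∈ Subgroup.closure (Set.range τ), σ x = y) (S : Finset α)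
    (hS : ∀ i x, x ∈ S ↔ τ i x ∈ S) (x : α) (hx : x ∈ S) (y : α) : y ∈ S := by
  obtain ⟨σ, hσ, rfl⟩ := h x y
  have : ∀ σ ∈ Subgroup.closure (Set.range τ), ∀ x, x ∈ S ↔ σ x ∈ S := by
    intro σ hσ
    induction hσ using Subgroup.closure_induction with
    | mem t ht => obtain ⟨i, rfl⟩ := ht; exact hS i
    | one => simp
    | mul a b _ _ ha hb => intro x; rw [Perm.mul_apply, ← ha, ← hb]
    | inv a _ ha => intro x; rw [ha (a⁻¹ x)]; simp
  exact (this σ hσ x).mp hx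

lemma exists_pres {α : Type} [Fintype α] [DecidableEq α] {b : ℕ} (τ : Fin b → Perm α)
    (h : ¬ ∀ x y, ∃ σ ∈ Subgroup.closure (Set.range τ), σ x = y) :
    ∃ S : Finset α, S.Nonempty ∧ S ≠ Finset.univ ∧ ∀ i x, x ∈ S ↔ τ i x ∈ S := by
  classical
  push Not at h
  obtain ⟨x, y, hxy⟩ := h
  refine ⟨Finset.univ.filter fun z => ∃ σ ∈ Subgroup.closure (Set.range τ), σ x = z, ⟨x, ?_⟩, ?_, ?_⟩
  · simp only [Finset.mem_filter, Finset.mem_univ, true_and]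
    exact ⟨1, Subgroup.one_mem _, rfl⟩
  · intro he
    have := Finset.mem_univ y
    rw [← he] at this
    simp only [Finset.mem_filter, Finset.mem_univ, true_and] at this
    obtain ⟨σ, hσ, h⟩ := this
    exact hxy σ hσ h
  · intro i z
    have hi : τ i ∈ Subgroup.closure (Set.range τ) := Subgroup.subset_closure ⟨i, rfl⟩
    simp only [Finset.mem_filter, Finset.mem_univ, true_and]
    constructor
    · rintro ⟨σ, hσ, rfl⟩
      exact ⟨τ i * σ, Subgroup.mul_mem _ hi hσ, rfl⟩
    · rintro ⟨σ, hσ, h⟩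
      refine ⟨(τ i)⁻¹ * σ, Subgroup.mul_mem _ (Subgroup.inv_mem _ hi) hσ, ?_⟩
      rw [Perm.mul_apply, h]; simp

lemma QS_inter {α : Type} [Fintype α] [DecidableEq α] (hn : 5 ≤ Fintype.card α) (S S' : Finset α)
    (hS : S.card = 1 ∨ S.card = 2) (hS' : S'.card = 1 ∨ S'.card = 2) (hne : S ≠ S') :
    ∃ S0 : Finset α, S0.card = 2 ∧ QS S ∩ QS S' ⊂ QS S0 := by
  have key : ∀ S S' : Finset α, S.card = 2 → (S'.card = 1 ∨ S'.card = 2) → S ≠ S' →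
      QS S ∩ QS S' ⊂ QS S := by
    intro S S' hS hS' hne
    refine Finset.ssubset_iff_subset_ne.mpr ⟨Finset.inter_subset_left, fun he => ?_⟩
    have hsub : QS S ⊆ QS S' := Finset.inter_eq_left.mp he
    obtain ⟨a, b, hab, rfl⟩ := Finset.card_eq_two.mp hS
    have h1 := (swap_mem_QS S' a b hab).mp (hsub ((swap_mem_QS _ a b hab).mpr (by simp)))
    by_cases ha : a ∈ S'
    · have hb := h1.mp ha
      apply hne
      apply Finset.eq_of_subset_of_card_le
      · intro x hx; simp at hx; rcases hx with rfl | rfl <;> assumption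
      · rw [hS]; omega
    · have hb : b ∉ S' := fun h => ha (h1.mpr h)
      obtain ⟨k, hk⟩ := Finset.card_pos.mp (show 0 < S'.card by omega)
      have : ∃ m, m ∉ S' ∪ {a, b} := by
        by_contra hcon
        push Not at hcon
        have h2 := Finset.card_union_le S' {a, b}
        rw [Finset.eq_univ_iff_forall.mpr hcon, Finset.card_univ] at h2
        omega
      obtain ⟨m, hm⟩ := this
      simp only [Finset.mem_union, Finset.mem_insert, Finset.mem_singleton, not_or] at hm
      have hkm : k ≠ m := by rintro rfl; exact hm.1 hk
      have hka : k ≠ a := by rintro rfl; exact ha hk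
      have hkb : k ≠ b := by rintro rfl; exact hb hk
      have h3 := (swap_mem_QS S' k m hkm).mp (hsub ((swap_mem_QS _ k m hkm).mpr (by simp [hm, hka, hkb])))
      exact hm.1 (h3.mp hk)
  rcases hS with hS | hS
  · rcases hS' with hS' | hS'
    · obtain ⟨i, rfl⟩ := Finset.card_eq_one.mp hS
      obtain ⟨j, rfl⟩ := Finset.card_eq_one.mp hS'
      have hij : i ≠ j := by rintro rfl; exact hne rfl
      refine ⟨{i, j}, Finset.card_pair hij, Finset.ssubset_iff_subset_ne.mpr ⟨?_, ?_⟩⟩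
      · intro t ht
        simp only [QS, Finset.mem_inter, Finset.mem_filter, Finset.mem_singleton, Finset.mem_insert] at ht ⊢
        refine ⟨ht.1.1, fun x => ?_⟩
        rw [ht.1.2 x, ht.2.2 x]
      · intro he
        have : swap i j ∈ QS {i, j} := (swap_mem_QS _ i j hij).mpr (by simp)
        rw [← he, Finset.mem_inter, swap_mem_QS _ i j hij] at this
        simp [hij.symm] at this
    · exact ⟨S', hS', by rw [Finset.inter_comm]; exact key S' S hS' (Or.inl hS) hne.symm⟩
  · exact ⟨S, hS, key S S' hS hS' hne⟩

def F12 (α : Type) [Fintype α] [DecidableEq α] : Finset (Finset α) :=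
  Finset.univ.filter fun S => S.card = 1 ∨ S.card = 2

lemma QS_mid {α : Type} [Fintype α] [DecidableEq α] (S S0 : Finset α) (h0 : S0.card = 2)
    (h3 : 3 ≤ S.card) (h4 : S.card + 3 ≤ Fintype.card α) : (QS S).card < (QS S0).card := by
  have h1 := card_QS S
  have h2 := card_QS S0
  rw [h0] at h2
  have h3' : (3:ℝ) ≤ S.card := by exact_mod_cast h3
  have h4' : (S.card:ℝ) + 3 ≤ Fintype.card α := by exact_mod_cast h4
  have : ((QS S).card:ℝ) < (QS S0).card := by
    push_cast at h2
    nlinarith [mul_pos (show (0:ℝ) < S.card - 2 by linarith) (show (0:ℝ) < Fintype.card α - 2 - S.card by linarith)]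
  exact_mod_cast this

open Classical in
lemma pointwise {α : Type} [Fintype α] [DecidableEq α] (hn : 5 ≤ Fintype.card α) (m : ℕ)
    (hm : ∀ S : Finset α, S.card = 2 → (QS S).card = m) {b : ℕ} (τ : Fin b → Perm α)
    (hτ : ∀ i, τ i ∈ swaps α) (hbad : ∀ P : Finset (Perm α), (∀ i, τ i ∈ P) → m ≤ P.card) :
    (if ∀ x y, ∃ σ ∈ Subgroup.closure (Set.range τ), σ x = y then (1:ℝ) else 0) - 1 +
      ∑ S ∈ F12 α, (if ∀ i, τ i ∈ QS S then (1:ℝ) else 0) = 0 := by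
  have hQ : ∀ S : Finset α, (∀ i, τ i ∈ QS S) ↔ ∀ i x, x ∈ S ↔ τ i x ∈ S := by
    intro S
    simp only [QS, Finset.mem_filter]
    exact ⟨fun h i => (h i).2, fun h i => ⟨hτ i, h i⟩⟩
  split_ifs with ht
  · rw [Finset.sum_eq_zero]
    · simp
    · intro S hS
      rw [if_neg]
      intro h
      rw [hQ] at h
      simp only [F12, Finset.mem_filter, Finset.mem_univ, true_and] at hS
      obtain ⟨x, hx⟩ := Finset.card_pos.mp (show 0 < S.card by omega)
      have := Finset.eq_univ_iff_forall.mpr (trans_pres τ ht S h x hx)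
      rw [this, Finset.card_univ] at hS
      omega
  · have hex : ∃ S ∈ F12 α, ∀ i, τ i ∈ QS S := by
      obtain ⟨S, hS1, hS2, hS3⟩ := exists_pres τ ht
      have c1 : 0 < S.card := Finset.card_pos.mpr hS1
      have c2 : 0 < Sᶜ.card := Finset.card_pos.mpr (by
        rw [Finset.nonempty_iff_ne_empty]
        intro h
        exact hS2 (by simpa using h))
      have c3 := Finset.card_compl_add_card S
      have hmid : ¬ (3 ≤ S.card ∧ S.card + 3 ≤ Fintype.card α) := by
        rintro ⟨h3, h4⟩
        obtain ⟨S0, -, hS0⟩ := Finset.exists_subset_card_eq (show 2 ≤ S.card by omega)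
        have h5 := QS_mid S S0 hS0 h3 h4
        have h6 := hbad (QS S) ((hQ S).mpr hS3)
        rw [hm S0 hS0] at h5
        omega
      by_cases h : S.card ≤ 2
      · exact ⟨S, by simp only [F12, Finset.mem_filter, Finset.mem_univ, true_and]; omega, (hQ S).mpr hS3⟩
      · refine ⟨Sᶜ, by simp only [F12, Finset.mem_filter, Finset.mem_univ, true_and]; omega, (hQ _).mpr ?_⟩
        intro i x
        rw [Finset.mem_compl, Finset.mem_compl, hS3 i x]
    obtain ⟨S, hS, hp⟩ := hex
    rw [Finset.sum_eq_single_of_mem S hS, if_pos hp]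
    · simp
    · intro S' hS' hne
      rw [if_neg]
      intro hp'
      simp only [F12, Finset.mem_filter, Finset.mem_univ, true_and] at hS hS'
      obtain ⟨S0, h0, h1⟩ := QS_inter hn S S' hS hS' hne.symm
      have h2 := Finset.card_lt_card h1
      have h3 := hbad _ (fun i => Finset.mem_inter.mpr ⟨hp i, hp' i⟩)
      rw [hm S0 h0] at h2
      omega

open Classical in
lemma counting {α : Type} [Fintype α] [DecidableEq α] (hn : 5 ≤ Fintype.card α) (m : ℕ)
    (hm : ∀ S : Finset α, S.card = 2 → (QS S).card = m) :
    ∃ K : ℝ, ∀ b : ℕ, |((Finset.univ.filter fun τ : Fin b → Perm α => (∀ i, τ i ∈ swaps α) ∧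
        (List.ofFn τ).prod = 1 ∧ ∀ x y, ∃ σ ∈ Subgroup.closure (Set.range τ), σ x = y).card : ℝ)
        - cnt (swaps α) b + ∑ S ∈ F12 α, (cnt (QS S) b : ℝ)| ≤ K * ((m - 1 : ℕ) : ℝ) ^ b := by
  refine ⟨((F12 α).card + 1) * Fintype.card (Finset (Perm α)), fun b => ?_⟩
  set A : Finset (Fin b → Perm α) := Finset.univ.filter fun τ => (∀ i, τ i ∈ swaps α) ∧
    (List.ofFn τ).prod = 1 with hA
  let f : (Fin b → Perm α) → ℝ := fun τ =>
    (if ∀ x y, ∃ σ ∈ Subgroup.closure (Set.range τ), σ x = y then (1:ℝ) else 0) - 1 +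
      ∑ S ∈ F12 α, (if ∀ i, τ i ∈ QS S then (1:ℝ) else 0)
  have e1 : ((Finset.univ.filter fun τ : Fin b → Perm α => (∀ i, τ i ∈ swaps α) ∧
        (List.ofFn τ).prod = 1 ∧ ∀ x y, ∃ σ ∈ Subgroup.closure (Set.range τ), σ x = y).card : ℝ) =
      ∑ τ ∈ A, (if ∀ x y, ∃ σ ∈ Subgroup.closure (Set.range τ), σ x = y then (1:ℝ) else 0) := by
    rw [Finset.sum_boole, hA, Finset.filter_filter]
    simp only [and_assoc]
  have e2 : (cnt (swaps α) b : ℝ) = ∑ τ ∈ A, (1:ℝ) := by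
    rw [Finset.sum_const, nsmul_eq_mul, mul_one, hA, cnt]
  have e3 : ∀ S : Finset α, (cnt (QS S) b : ℝ) = ∑ τ ∈ A, (if ∀ i, τ i ∈ QS S then (1:ℝ) else 0) := by
    intro S
    rw [Finset.sum_boole, hA, Finset.filter_filter, cnt]
    congr 2
    ext τ
    simp only [Finset.mem_filter, Finset.mem_univ, true_and]
    constructor
    · rintro ⟨h1, h2⟩
      exact ⟨⟨fun i => (Finset.mem_filter.mp (h1 i)).1, h2⟩, h1⟩
    · rintro ⟨⟨_, h2⟩, h1⟩
      exact ⟨h1, h2⟩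
  have e4 : ((Finset.univ.filter fun τ : Fin b → Perm α => (∀ i, τ i ∈ swaps α) ∧
        (List.ofFn τ).prod = 1 ∧ ∀ x y, ∃ σ ∈ Subgroup.closure (Set.range τ), σ x = y).card : ℝ)
        - cnt (swaps α) b + ∑ S ∈ F12 α, (cnt (QS S) b : ℝ) = ∑ τ ∈ A, f τ := by
    rw [e1, e2, Finset.sum_congr rfl (fun S _ => e3 S), Finset.sum_comm]
    simp only [f, Finset.sum_add_distrib, Finset.sum_sub_distrib]
  rw [e4]
  let B : Finset (Fin b → Perm α) := (Finset.univ.filter fun P : Finset (Perm α) => P.card < m).biUnion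
    fun P => Fintype.piFinset fun _ => P
  have hB : (B.card : ℝ) ≤ Fintype.card (Finset (Perm α)) * ((m - 1 : ℕ) : ℝ) ^ b := by
    have : B.card ≤ Fintype.card (Finset (Perm α)) * (m - 1) ^ b := by
      refine Finset.card_biUnion_le.trans ?_
      refine (Finset.sum_le_card_nsmul _ _ ((m-1)^b) ?_).trans ?_
      · intro P hP
        rw [Fintype.card_piFinset]
        simp only [Finset.prod_const, Finset.card_univ, Fintype.card_fin]
        simp only [Finset.mem_filter, Finset.mem_univ, true_and] at hP
        exact Nat.pow_le_pow_left (by omega) b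
      · rw [smul_eq_mul]
        exact Nat.mul_le_mul_right _ (Finset.card_le_univ _)
    exact_mod_cast this
  have hf : ∀ τ, |f τ| ≤ (F12 α).card + 1 := by
    intro τ
    have h1 : 0 ≤ ∑ S ∈ F12 α, (if ∀ i, τ i ∈ QS S then (1:ℝ) else 0) :=
      Finset.sum_nonneg fun S _ => by split_ifs <;> norm_num
    have h2 : ∑ S ∈ F12 α, (if ∀ i, τ i ∈ QS S then (1:ℝ) else 0) ≤ (F12 α).card := by
      rw [Finset.sum_boole]
      exact_mod_cast Finset.card_filter_le _ _
    simp only [f]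
    rw [abs_le]
    split_ifs <;> constructor <;> linarith
  have hf0 : ∀ τ ∈ A, τ ∉ B → f τ = 0 := by
    intro τ hτ hτB
    rw [hA, Finset.mem_filter] at hτ
    refine pointwise hn m hm τ hτ.2.1 ?_
    intro P hP
    by_contra hlt
    apply hτB
    simp only [B, Finset.mem_biUnion, Finset.mem_filter, Finset.mem_univ, true_and, Fintype.mem_piFinset]
    exact ⟨P, by omega, hP⟩
  calc |∑ τ ∈ A, f τ| ≤ ∑ τ ∈ A, |f τ| := Finset.abs_sum_le_sum_abs _ _
    _ ≤ ∑ τ ∈ B, |f τ| := by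
        rw [← Finset.sum_filter_add_sum_filter_not A (fun τ => τ ∈ B)]
        rw [Finset.sum_eq_zero (s := A.filter fun τ => ¬ τ ∈ B), add_zero]
        · refine Finset.sum_le_sum_of_subset_of_nonneg ?_ (fun _ _ _ => abs_nonneg _)
          intro τ hτ
          exact (Finset.mem_filter.mp hτ).2
        · intro τ hτ
          rw [hf0 τ (Finset.mem_filter.mp hτ).1 (Finset.mem_filter.mp hτ).2, abs_zero]
    _ ≤ B.card • (((F12 α).card : ℝ) + 1) := Finset.sum_le_card_nsmul _ _ _ (fun τ _ => hf τ)
    _ ≤ _ := by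
        rw [nsmul_eq_mul]
        have : (0:ℝ) ≤ (F12 α).card + 1 := by positivity
        nlinarith

lemma sum_F12 {α : Type} [Fintype α] [DecidableEq α] (f : Finset α → ℝ) :
    ∑ S ∈ F12 α, f S = ∑ i : α, f {i} + ∑ S ∈ Finset.powersetCard 2 (Finset.univ : Finset α), f S := by
  have h : F12 α = Finset.powersetCard 1 Finset.univ ∪ Finset.powersetCard 2 Finset.univ := by
    ext S
    simp [F12, Finset.mem_powersetCard]
  rw [h, Finset.sum_union, Finset.powersetCard_one, Finset.sum_map]
  · rfl
  · rw [Finset.disjoint_left]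
    intro S h1 h2
    rw [Finset.mem_powersetCard] at h1 h2
    omega

lemma pow_small (x M : ℝ) (hx : 0 ≤ x) (hM : x < M) (c : ℝ) :
    Tendsto (fun b : ℕ => (c * x ^ b) / M ^ b) atTop (𝓝 0) := by
  have hM0 : 0 < M := lt_of_le_of_lt hx hM
  have := (tendsto_pow_atTop_nhds_zero_of_lt_one (div_nonneg hx hM0.le)
    ((div_lt_one hM0).mpr hM)).const_mul c
  rw [mul_zero] at this
  refine this.congr fun b => ?_
  rw [div_pow, mul_div_assoc]

open Classical in
lemma main_count (d : ℕ) (hd : 5 ≤ d) : ∃ R : ℕ → ℝ,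
    Tendsto (fun b : ℕ => R b / (((d : ℝ) ^ 2 - 5 * (d : ℝ) + 8) / 2) ^ b) atTop (𝓝 0) ∧
    ∀ b, Even b → ((Finset.univ.filter fun τ : Fin b → Perm (Fin d) => (∀ i, τ i ∈ swaps (Fin d)) ∧
        (List.ofFn τ).prod = 1 ∧ ∀ x y, ∃ σ ∈ Subgroup.closure (Set.range τ), σ x = y).card : ℝ) =
      2 / (d.factorial : ℝ) * ((d : ℝ) * ((d : ℝ) - 1) / 2) ^ b
      + 2 * ((d : ℝ) - 1) ^ 2 / (d.factorial : ℝ) * ((d : ℝ) * ((d : ℝ) - 3) / 2) ^ b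
      - d * (2 / ((d - 1).factorial : ℝ) * (((d : ℝ) - 1) * ((d : ℝ) - 2) / 2) ^ b)
      - ((d : ℝ) * ((d : ℝ) - 1) / 2) * (1 / ((d - 2).factorial : ℝ) *
          (((d : ℝ) ^ 2 - 5 * (d : ℝ) + 8) / 2) ^ b) + R b := by
  have hdr : (5:ℝ) ≤ d := by exact_mod_cast hd
  set M : ℝ := ((d : ℝ) ^ 2 - 5 * (d : ℝ) + 8) / 2 with hM
  have hMpos : 0 < M := by rw [hM]; nlinarith
  have hcard : ∀ S : Finset (Fin d), S.card = 2 → ((QS S).card : ℝ) = M := by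
    intro S hS
    have := card_QS S
    rw [hS, Fintype.card_fin] at this
    push_cast at this
    rw [hM]; nlinarith
  obtain ⟨S0, -, hS0⟩ := Finset.exists_subset_card_eq (s := (Finset.univ : Finset (Fin d))) (n := 2)
    (by simp; omega)
  set m := (QS S0).card with hm
  have hmM : (m : ℝ) = M := hcard S0 hS0
  have hmm : ∀ S : Finset (Fin d), S.card = 2 → (QS S).card = m := by
    intro S hS
    have : ((QS S).card : ℝ) = m := by rw [hcard S hS, hmM]
    exact_mod_cast this
  have hm0 : 0 < m := by
    have : (0:ℝ) < m := by rw [hmM]; exact hMpos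
    exact_mod_cast this
  obtain ⟨K, hK⟩ := counting (α := Fin d) (by simpa using hd) m hmm
  obtain ⟨r0, hr0, hr0'⟩ := perm_count (α := Fin d) (by simp; omega) M hMpos
    (by rw [Fintype.card_fin, hM]; nlinarith)
  rw [Fintype.card_fin] at hr0'
  have hc1 : ∀ i : Fin d, Fintype.card {a // a ≠ i} = d - 1 := by
    intro i; simp [Fintype.card_subtype_compl]
  have hd1 : ((d - 1 : ℕ) : ℝ) = d - 1 := by rw [Nat.cast_sub (by omega)]; simp
  have h1 : ∀ i : Fin d, ∃ r : ℕ → ℝ, Tendsto (fun b : ℕ => r b / M ^ b) atTop (𝓝 0) ∧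
      ∀ b, Even b → (cnt (QS {i}) b : ℝ) =
        2 / ((d - 1).factorial : ℝ) * (((d : ℝ) - 1) * ((d : ℝ) - 2) / 2) ^ b + r b := by
    intro i
    obtain ⟨r, hr, hr'⟩ := perm_count (α := {a // a ≠ i}) (by rw [hc1]; omega) M hMpos
      (by rw [hc1, hd1, hM]; nlinarith)
    rw [hc1, hd1] at hr'
    refine ⟨fun b => 2 * ((d:ℝ) - 1 - 1) ^ 2 / ((d - 1).factorial : ℝ) *
      (((d:ℝ) - 1) * ((d:ℝ) - 1 - 3) / 2) ^ b + r b, ?_, ?_⟩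
    · have := (pow_small (((d:ℝ) - 1) * ((d:ℝ) - 1 - 3) / 2) M (by nlinarith) (by rw [hM]; nlinarith)
        (2 * ((d:ℝ) - 1 - 1) ^ 2 / ((d - 1).factorial : ℝ))).add hr
      rw [add_zero] at this
      refine this.congr fun b => ?_
      rw [add_div]
    · intro b hb
      rw [cnt_QS_one, hr' b hb, show (d:ℝ) - 1 - 1 = d - 2 by ring]
      ring
  have h2 : ∀ S : Finset (Fin d), ∃ r : ℕ → ℝ, S.card = 2 →
      (Tendsto (fun b : ℕ => r b / M ^ b) atTop (𝓝 0) ∧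
      ∀ b, Even b → (cnt (QS S) b : ℝ) = 1 / ((d - 2).factorial : ℝ) * M ^ b + r b) := by
    intro S
    by_cases hS : S.card = 2
    · obtain ⟨r, hr, hr'⟩ := cnt_QS_asymp S (Finset.card_pos.mp (by rw [hmm S hS]; exact hm0))
      rw [hcard S hS] at hr hr'
      refine ⟨r, fun _ => ⟨hr, fun b hb => ?_⟩⟩
      rw [hr' b hb, hS, Fintype.card_fin, Nat.factorial_two]
      have : ((d-2).factorial : ℝ) ≠ 0 := by positivity
      push_cast
      congr 2
      field_simp
    · exact ⟨0, fun h => absurd h hS⟩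
  choose r1 hr1 hr1' using h1
  choose r2 hr2 using h2
  let N : ℕ → ℝ := fun b => ((Finset.univ.filter fun τ : Fin b → Perm (Fin d) => (∀ i, τ i ∈ swaps (Fin d)) ∧
        (List.ofFn τ).prod = 1 ∧ ∀ x y, ∃ σ ∈ Subgroup.closure (Set.range τ), σ x = y).card : ℝ)
  obtain ⟨E, hEd⟩ : ∃ E : ℕ → ℝ, ∀ b, E b = N b - cnt (swaps (Fin d)) b + ∑ S ∈ F12 (Fin d), (cnt (QS S) b : ℝ) := ⟨_, fun _ => rfl⟩
  have hE : Tendsto (fun b => E b / M ^ b) atTop (𝓝 0) := by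
    have hlt : (((m - 1 : ℕ) : ℝ)) < M := by
      rw [← hmM]; exact_mod_cast Nat.sub_lt hm0 one_pos
    refine squeeze_zero_norm (fun b => ?_) (pow_small _ M (Nat.cast_nonneg _) hlt K)
    rw [norm_div, Real.norm_eq_abs, Real.norm_of_nonneg (pow_nonneg hMpos.le b)]
    have hKb : |E b| ≤ K * ((m - 1 : ℕ) : ℝ) ^ b := by
      rw [hEd]; simp only [N]
      convert hK b
    exact div_le_div_of_nonneg_right hKb (pow_nonneg hMpos.le b)
  refine ⟨fun b => E b + r0 b - ∑ i, r1 i b - ∑ S ∈ Finset.powersetCard 2 Finset.univ, r2 S b, ?_, ?_⟩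
  · have t1 : Tendsto (fun b => ∑ i, r1 i b / M ^ b) atTop (𝓝 0) := by
      simpa using tendsto_finsetSum Finset.univ (fun i _ => hr1 i)
    have t2 : Tendsto (fun b => ∑ S ∈ Finset.powersetCard 2 Finset.univ, r2 S b / M ^ b) atTop (𝓝 0) := by
      simpa using tendsto_finsetSum (Finset.powersetCard 2 (Finset.univ : Finset (Fin d)))
        (fun S hS => (hr2 S (Finset.mem_powersetCard.mp hS).2).1)
    have := ((hE.add hr0).sub t1).sub t2
    simp only [add_zero, sub_zero] at this
    refine this.congr fun b => ?_
    rw [sub_div, sub_div, add_div, Finset.sum_div, Finset.sum_div]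
  · intro b hb
    change N b = _
    have e : E b = N b - cnt (swaps (Fin d)) b + ∑ S ∈ F12 (Fin d), (cnt (QS S) b : ℝ) := hEd b
    rw [sum_F12, hr0' b hb, Finset.sum_congr rfl (fun i _ => hr1' i b hb),
      Finset.sum_congr rfl (fun S hS => (hr2 S (Finset.mem_powersetCard.mp hS).2).2 b hb),
      Finset.sum_add_distrib, Finset.sum_add_distrib, Finset.sum_const, Finset.sum_const,
      Finset.card_powersetCard, Finset.card_univ, Fintype.card_fin, nsmul_eq_mul, nsmul_eq_mul,
      Nat.cast_choose_two] at e
    dsimp only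
    linarith

theorem hurwitz_large_genus_subleading (d : ℕ) (hd : 5 ≤ d) :
    Tendsto
      (fun g : ℕ =>
        (hurwitz g d
            - 2 / (Nat.factorial d : ℝ) ^ 2 *
                ((d : ℝ) * ((d : ℝ) - 1) / 2) ^ (2 * g + 2 * d - 2)
            + 2 / (Nat.factorial (d - 1) : ℝ) ^ 2 *
                (((d : ℝ) - 1) * ((d : ℝ) - 2) / 2) ^ (2 * g + 2 * d - 2)
            - 2 / ((d : ℝ) ^ 2 * (Nat.factorial (d - 2) : ℝ) ^ 2) *
                ((d : ℝ) * ((d : ℝ) - 3) / 2) ^ (2 * g + 2 * d - 2)) /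
          (1 / (2 * (Nat.factorial (d - 2) : ℝ) ^ 2) *
            (((d : ℝ) ^ 2 - 5 * (d : ℝ) + 8) / 2) ^ (2 * g + 2 * d - 2)))
      atTop (𝓝 (-1)) := by
  classical
  obtain ⟨R, hR, hR'⟩ := main_count d hd
  have hdr : (5:ℝ) ≤ d := by exact_mod_cast hd
  have hMpos : 0 < ((d : ℝ) ^ 2 - 5 * (d : ℝ) + 8) / 2 := by nlinarith
  have hb : Tendsto (fun g : ℕ => 2 * g + 2 * d - 2) atTop atTop :=
    tendsto_atTop_mono (fun g => by show g ≤ _; omega) tendsto_id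
  have hlim := ((hR.comp hb).const_mul (2 * (Nat.factorial (d - 2) : ℝ) ^ 2 / (d.factorial : ℝ))).add_const (-1)
  rw [mul_zero, zero_add] at hlim
  refine hlim.congr fun g => ?_
  have hev : Even (2 * g + 2 * d - 2) := ⟨g + d - 1, by omega⟩
  have hN := hR' _ hev
  have hH : hurwitz g d = ((Finset.univ.filter fun τ : Fin (2 * g + 2 * d - 2) → Perm (Fin d) =>
      (∀ i, τ i ∈ swaps (Fin d)) ∧
        (List.ofFn τ).prod = 1 ∧ ∀ x y, ∃ σ ∈ Subgroup.closure (Set.range τ), σ x = y).card : ℝ) /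
      d.factorial := by
    rw [hurwitz, Nat.card_eq_fintype_card, Fintype.card_subtype]
    simp only [mem_swaps]
  rw [hH, hN]
  simp only [Function.comp]
  generalize 2 * g + 2 * d - 2 = b
  obtain ⟨n, rfl⟩ : ∃ n, d = n + 2 := ⟨d - 2, by omega⟩
  have hM0 := pow_pos hMpos b
  generalize ((((n + 2 : ℕ) : ℝ) ^ 2 - 5 * ((n + 2 : ℕ) : ℝ) + 8) / 2) ^ b = X at *
  generalize (((n + 2 : ℕ) : ℝ) * (((n + 2 : ℕ) : ℝ) - 1) / 2) ^ b = X1 at *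
  generalize ((((n + 2 : ℕ) : ℝ) - 1) * (((n + 2 : ℕ) : ℝ) - 2) / 2) ^ b = X2 at *
  generalize (((n + 2 : ℕ) : ℝ) * (((n + 2 : ℕ) : ℝ) - 3) / 2) ^ b = X3 at *
  generalize R b = Y
  rw [show n + 2 - 1 = n + 1 by omega, show n + 2 - 2 = n by omega, Nat.factorial_succ (n+1),
    Nat.factorial_succ n]
  have hf : (n.factorial : ℝ) ≠ 0 := by positivity
  have h1 : (n:ℝ) + 1 ≠ 0 := by positivity
  have h2 : (n:ℝ) + 2 ≠ 0 := by positivity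
  have h3 : (n:ℝ) + 1 + 1 = n + 2 := by ring
  have hX : X ≠ 0 := hM0.ne'
  push_cast
  rw [h3, show (n:ℝ) + 2 - 1 = n + 1 by ring]
  field_simp
  ring
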